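/- Let K be an algebraically closed field, let m, n >= 1, let w in S^{m,n}_infty, and fix any antidiagonal term order on K[u_{ij} : (i,j) in [m] x [n]]. Then J_w = init(I_w) = init(I(X_w)) and I_w = I(X_w); in particular, I_w is a prime ideal and the minors det(U_{AB}), over all A subset of [i] and B subset of [j] with |A| = |B| = r_w(i,j)+1 for some (i,j) in [m] x [n], form a Groebner basis for I(X_w) (they generate it and their initial terms generate its initial ideal). -/

import Mathlib

namespace Paper

/-!
We model a permutation of the positive integers `{1, 2, 3, ...}` as an `Equiv.Perm ℕ`
that fixes `0`; all notions below refer only to positive inputs.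
-/

/-- The rank `r_w(i,j) = #{a ∈ [i] : w(a) ∈ [j]}` of the `i × j` partial
permutation matrix of `w`, where `[k] = {1, ..., k}`. -/
def rnk (w : Equiv.Perm ℕ) (i j : ℕ) : ℕ :=
  ((Finset.Icc 1 i).filter fun a => w a ∈ Finset.Icc 1 j).card

/-- Right descent set `Des_R(w) = {i ≥ 1 : w(i) > w(i+1)}`. -/
def DesR (w : Equiv.Perm ℕ) : Set ℕ := {i | 1 ≤ i ∧ w (i + 1) < w i}

/-- Left descent set `Des_L(w) = Des_R(w⁻¹)`. -/
def DesL (w : Equiv.Perm ℕ) : Set ℕ := DesR w⁻¹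

/-- `S_∞`: permutations of the positive integers fixing all but finitely many points. -/
def SInfty : Set (Equiv.Perm ℕ) :=
  {w | w 0 = 0 ∧ Set.Finite {i : ℕ | w i ≠ i}}

/-- `S^{m,n}_∞ = {w ∈ S_∞ : Des_R(w) ⊆ [m], Des_L(w) ⊆ [n]}`. -/
def SmnInfty (m n : ℕ) : Set (Equiv.Perm ℕ) :=
  {w | w ∈ SInfty ∧ DesR w ⊆ Set.Icc 1 m ∧ DesL w ⊆ Set.Icc 1 n}

/-- The Rothe diagram `D(w) = {(i,j) : 0 < j < w(i), 0 < i < w⁻¹(j)}`. -/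
def Rothe (w : Equiv.Perm ℕ) : Set (ℕ × ℕ) :=
  {p | 0 < p.2 ∧ p.2 < w p.1 ∧ 0 < p.1 ∧ p.1 < w⁻¹ p.2}

/-- The function `1_FPF`, sending `i ↦ i - (-1)^i` on positive integers (it fixes `0`). -/
def oneFPF : ℕ → ℕ := fun i => if i % 2 = 1 then i + 1 else i - 1

/-- `I^FPF_∞`: fixed-point-free involutions of the positive integers agreeing with
`1_FPF` at all sufficiently large inputs. -/
def IFPFInfty : Set (Equiv.Perm ℕ) :=
  {z | z 0 = 0 ∧ (∀ i, 1 ≤ i → z i ≠ i) ∧ z * z = 1 ∧ ∃ N, ∀ i, N ≤ i → z i = oneFPF i}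

/-- The skew-symmetric Rothe diagram `D^ss(z) = {(i,j) : 0 < j < z(i), j < i < z(j)}`. -/
def Dss (z : Equiv.Perm ℕ) : Set (ℕ × ℕ) :=
  {p | 0 < p.2 ∧ p.2 < z p.1 ∧ p.2 < p.1 ∧ p.1 < z p.2}

/-- `FPF_n(I_n) = {z ∈ I^FPF_∞ : D^ss(z) ⊆ [n] × [n]}`. -/
def FPFIn (n : ℕ) : Set (Equiv.Perm ℕ) :=
  {z | z ∈ IFPFInfty ∧ Dss z ⊆ Set.Icc 1 n ×ˢ Set.Icc 1 n}

/-- `ℓ_fpf(z) = |D^ss(z)|`. -/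
noncomputable def ellFpf (z : Equiv.Perm ℕ) : ℕ := (Dss z).ncard

/-- Bruhat order on `I^FPF_∞`: reflexive-transitive closure of `z < (i,j) z (i,j)`
whenever `i < j` and `ℓ_fpf` goes up by exactly one. -/
def fpfBruhatLe (z y : Equiv.Perm ℕ) : Prop :=
  Relation.ReflTransGen
    (fun a b => ∃ i j : ℕ, 1 ≤ i ∧ i < j ∧
      b = Equiv.swap i j * a * Equiv.swap i j ∧ ellFpf b = ellFpf a + 1) z y

/-- `i` is a visible descent of `z` if `i ≥ 1` and `z(i+1) < min(i, z(i))`. -/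
def visibleDescent (z : Equiv.Perm ℕ) (i : ℕ) : Prop :=
  1 ≤ i ∧ z (i + 1) < min i (z i)

/-- `Ψ(z, p) = {(p,r) z (p,r) : r > p, ℓ_fpf((p,r) z (p,r)) = ℓ_fpf(z) + 1}`. -/
def PsiSet (z : Equiv.Perm ℕ) (p : ℕ) : Set (Equiv.Perm ℕ) :=
  {y | ∃ r : ℕ, p < r ∧ y = Equiv.swap p r * z * Equiv.swap p r ∧ ellFpf y = ellFpf z + 1}

/-- The dominant component `dom(z) = {(i,j) : i, j ≥ 1, r_z(i,j) = 0}`. -/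
def domSet (z : Equiv.Perm ℕ) : Set (ℕ × ℕ) :=
  {p | 1 ≤ p.1 ∧ 1 ≤ p.2 ∧ rnk z p.1 p.2 = 0}

/-- `(p, q)` is an outer corner of `dom(z)`. -/
def IsOuterCorner (z : Equiv.Perm ℕ) (p q : ℕ) : Prop :=
  1 ≤ p ∧ 1 ≤ q ∧ (p, q) ∉ domSet z ∧
    (p = 1 ∨ (p - 1, q) ∈ domSet z) ∧ (q = 1 ∨ (p, q - 1) ∈ domSet z)

/-- `I_n`: involutions in `S_∞` fixing every `i > n`. -/
def InvolIn (n : ℕ) : Set (Equiv.Perm ℕ) :=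
  {w | w 0 = 0 ∧ w * w = 1 ∧ ∀ i, n < i → w i = i}

/-- The fixed points of `z` lying in `[n]`. -/
def fixedPtsIn (n : ℕ) (z : Equiv.Perm ℕ) : Finset ℕ :=
  (Finset.Icc 1 n).filter fun i => z i = i

/-- The function swapping `m + 2t - 1` and `m + 2t` for every `t ≥ 1`, fixing all other points. -/
def tailSwapFun (m : ℕ) : ℕ → ℕ := fun i =>
  if i ≤ m then i else if (i - m) % 2 = 1 then i + 1 else i - 1

theorem tailSwapFun_involutive (m : ℕ) : Function.Involutive (tailSwapFun m) := by
  intro i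
  unfold tailSwapFun
  split_ifs <;> omega

/-- The involution swapping `m + 2t - 1` and `m + 2t` for every `t ≥ 1`. -/
def tailSwap (m : ℕ) : Equiv.Perm ℕ :=
  Function.Involutive.toPerm _ (tailSwapFun_involutive m)

/-- The fixed-point-free standardization `FPF_n(z) = z ⋅ (i_1,n+1)⋯(i_k,n+k) ⋅ c`,
where `i_1 < ⋯ < i_k` are the fixed points of `z` in `[n]` and `c` swaps
`n+k+2t-1, n+k+2t` for all `t ≥ 1`. -/
noncomputable def fpfStd (n : ℕ) (z : Equiv.Perm ℕ) : Equiv.Perm ℕ :=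
  z *
    (List.ofFn fun t : Fin (fixedPtsIn n z).card =>
      Equiv.swap ((fixedPtsIn n z).orderEmbOfFin rfl t) (n + (t : ℕ) + 1)).prod *
    tailSwap (n + (fixedPtsIn n z).card)

/-- `Mat^ss_n(K)`: skew-symmetric `n × n` matrices (transpose is the negative, zero diagonal).
Row/column index `a : Fin n` corresponds to the (1-indexed) row/column `a + 1`. -/
def MatSS (K : Type*) [CommRing K] (n : ℕ) : Set (Matrix (Fin n) (Fin n) K) :=
  {A | A.transpose = -A ∧ ∀ i, A i i = 0}

/-- The skew-symmetric matrix Schubert variety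
`X^ss_z = {A ∈ Mat^ss_n : rank A_{[i][j]} ≤ r_z(i,j) for all i, j ∈ [n]}`. -/
noncomputable def Xss (K : Type*) [Field K] (n : ℕ) (z : Equiv.Perm ℕ) :
    Set (Matrix (Fin n) (Fin n) K) :=
  {A | A ∈ MatSS K n ∧ ∀ (i j : ℕ) (hi : i ≤ n) (hj : j ≤ n), 1 ≤ i → 1 ≤ j →
    (A.submatrix (Fin.castLE hi) (Fin.castLE hj)).rank ≤ rnk z i j}

/-- `#{(i,j) : i > j, j < z(i), i < z(j)}` for a permutation of `Fin N`
(the `0`-indexed version of `ℓ_fpf`). -/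
def ellFpfFin {N : ℕ} (z : Equiv.Perm (Fin N)) : ℕ :=
  (Finset.univ.filter fun p : Fin N × Fin N => p.2 < p.1 ∧ p.2 < z p.1 ∧ p.1 < z p.2).card

/-- The Pfaffian of an `N × N` matrix:
`pf(A) = ∑_{z fpf involution of [N]} (-1)^{ℓ_fpf(z)} ∏_{z(i) < i} A_{z(i), i}`.
(The sum is empty, hence `0`, when `N` is odd.) -/
noncomputable def Pfaffian {R : Type*} [CommRing R] {N : ℕ} (A : Matrix (Fin N) (Fin N) R) : R :=
  ∑ z ∈ Finset.univ.filter (fun z : Equiv.Perm (Fin N) => (∀ i, z i ≠ i) ∧ ∀ i, z (z i) = i),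
    (-1 : R) ^ ellFpfFin z * ∏ i ∈ Finset.univ.filter (fun i : Fin N => z i < i), A (z i) i

/-- Index set for the variables `u_{ij}`, `n ≥ i > j ≥ 1`, of the coordinate ring
`R_n = K[Mat^ss_n]`; the variable `⟨(a, b), _⟩` is `u_{a+1, b+1}`. -/
abbrev SSVar (n : ℕ) : Type := {p : Fin n × Fin n // p.2 < p.1}

/-- The generic skew-symmetric matrix `U^ss` over `R_n`. -/
noncomputable def Uss (K : Type*) [CommRing K] (n : ℕ) :
    Matrix (Fin n) (Fin n) (MvPolynomial (SSVar n) K) :=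
  Matrix.of fun i j =>
    if h : j < i then MvPolynomial.X ⟨(i, j), h⟩
    else if h' : i < j then -MvPolynomial.X ⟨(j, i), h'⟩
    else 0

/-- The ideal of polynomials vanishing on a set `X`, where a point `A` is evaluated
via `ev A : σ → K`. -/
noncomputable def vanishingIdeal {K : Type*} [CommRing K] {σ M : Type*}
    (X : Set M) (ev : M → σ → K) : Ideal (MvPolynomial σ K) where
  carrier := {f | ∀ A ∈ X, MvPolynomial.eval (ev A) f = 0}
  zero_mem' := by simp
  add_mem' := by
    intro f g hf hg
    simp only [Set.mem_setOf_eq] at *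
    intro A hA
    rw [map_add, hf A hA, hg A hA, add_zero]
  smul_mem' := by
    intro c f hf
    simp only [Set.mem_setOf_eq] at *
    intro A hA
    rw [smul_eq_mul, map_mul, hf A hA, mul_zero]

/-- `I(X^ss_z) ⊆ R_n`, where `u_{ij}` is evaluated at `A` as `A_{ij}`. -/
noncomputable def IXss (K : Type*) [Field K] (n : ℕ) (z : Equiv.Perm ℕ) :
    Ideal (MvPolynomial (SSVar n) K) :=
  vanishingIdeal (Xss K n z) fun A v => A v.1.1 v.1.2

/-- `pf(U^ss_{RR})` for a finite row/column set `R` (listed in increasing order). -/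
noncomputable def pfUss (K : Type*) [CommRing K] {n : ℕ} (R : Finset (Fin n)) :
    MvPolynomial (SSVar n) K :=
  Pfaffian ((Uss K n).submatrix (fun s => R.orderEmbOfFin rfl s) fun t => R.orderEmbOfFin rfl t)

/-- The ideal `I^ss_z`, generated by the Pfaffians `pf(U^ss_{RR})` over all nonempty
even-size `R ⊆ [n]` such that `R ⊆ [i]` and `|R ∩ [j]| > r_z(i,j)` for some `i ≥ j`. -/
noncomputable def IssIdeal (K : Type*) [Field K] (n : ℕ) (z : Equiv.Perm ℕ) :
    Ideal (MvPolynomial (SSVar n) K) :=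
  Ideal.span {f : MvPolynomial (SSVar n) K | ∃ R : Finset (Fin n),
    R.Nonempty ∧ Even R.card ∧
    (∃ i j : ℕ, 1 ≤ j ∧ j ≤ i ∧ i ≤ n ∧ (∀ a ∈ R, (a : ℕ) + 1 ≤ i) ∧
      rnk z i j < (R.filter fun a : Fin n => (a : ℕ) + 1 ≤ j).card) ∧
    f = pfUss K R}

/-- The square-free monomial `u^ss_{AB}`: zero if `A ⊙ B` meets the diagonal, and otherwise
the product of the variables `u_{ij}` over the pairs `i > j` with `(i,j)` or `(j,i)` in
`A ⊙ B = {(a_0, b_r), (a_1, b_{r-1}), ..., (a_r, b_0)}`. -/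
noncomputable def ussMon (K : Type*) [CommRing K] {n : ℕ} (A B : Finset (Fin n)) :
    MvPolynomial (SSVar n) K :=
  if h : A.card = B.card then
    if ∃ t : Fin A.card, (A.orderEmbOfFin rfl t : Fin n) = B.orderEmbOfFin h.symm t.rev then 0
    else
      ∏ v ∈ Finset.univ.filter (fun v : SSVar n => ∃ t : Fin A.card,
          (A.orderEmbOfFin rfl t = v.1.1 ∧ B.orderEmbOfFin h.symm t.rev = v.1.2) ∨
          (A.orderEmbOfFin rfl t = v.1.2 ∧ B.orderEmbOfFin h.symm t.rev = v.1.1)),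
        MvPolynomial.X v
  else 0

/-- The monomial ideal `J^ss_r` of a symmetric rank table `r`, generated by the monomials
`u^ss_{AB}` with `A ⊆ [i]`, `B ⊆ [j]`, `|A| = |B| = r(i,j) + 1` for some `n ≥ i ≥ j ≥ 1`. -/
noncomputable def JssIdealOfTable (K : Type*) [CommRing K] (n : ℕ) (r : ℕ → ℕ → ℕ) :
    Ideal (MvPolynomial (SSVar n) K) :=
  Ideal.span {g : MvPolynomial (SSVar n) K | ∃ (i j : ℕ) (A B : Finset (Fin n)),
    1 ≤ j ∧ j ≤ i ∧ i ≤ n ∧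
    (∀ a ∈ A, (a : ℕ) + 1 ≤ i) ∧ (∀ b ∈ B, (b : ℕ) + 1 ≤ j) ∧
    A.card = r i j + 1 ∧ B.card = r i j + 1 ∧ g = ussMon K A B}

/-- `J^ss_z = J^ss_{r_z}`. -/
noncomputable def JssIdeal (K : Type*) [CommRing K] (n : ℕ) (z : Equiv.Perm ℕ) :
    Ideal (MvPolynomial (SSVar n) K) :=
  JssIdealOfTable K n (rnk z)

/-- Total degree of a monomial (exponent vector). -/
def totalDeg {σ : Type*} (m : σ →₀ ℕ) : ℕ := m.sum fun _ e => e

/-- The lexicographic order on the variables `u_{ij}` by the pair `(i, j)`. -/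
def varLT {n : ℕ} (v w : SSVar n) : Prop :=
  v.1.1 < w.1.1 ∨ (v.1.1 = w.1.1 ∧ v.1.2 < w.1.2)

/-- The (graded) reverse lexicographic term order on monomials of `R_n`:
`m₁ < m₂` iff `deg m₁ < deg m₂`, or the degrees agree and the lexicographically largest
variable with different exponents has strictly larger exponent in `m₁`. -/
def revlexLT {n : ℕ} (m₁ m₂ : SSVar n →₀ ℕ) : Prop :=
  totalDeg m₁ < totalDeg m₂ ∨
    (totalDeg m₁ = totalDeg m₂ ∧ ∃ v, m₂ v < m₁ v ∧ ∀ w, varLT v w → m₁ w = m₂ w)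

/-- The initial ideal of `I` with respect to a strict term order `lt`: the ideal
generated by the leading monomials `init(f)` of the nonzero `f ∈ I`. -/
noncomputable def initIdeal {K : Type*} [CommRing K] {σ : Type*}
    (lt : (σ →₀ ℕ) → (σ →₀ ℕ) → Prop) (I : Ideal (MvPolynomial σ K)) :
    Ideal (MvPolynomial σ K) :=
  Ideal.span {g : MvPolynomial σ K | ∃ f ∈ I, f ≠ 0 ∧ ∃ m : σ →₀ ℕ, m ∈ f.support ∧
    (∀ m' ∈ f.support, m' ≠ m → lt m' m) ∧ g = MvPolynomial.monomial m (1 : K)}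

/-- A term order on the monomials of a polynomial ring: a linear order in which `1` is
the unique minimum and multiplication by a fixed monomial preserves order. -/
structure TermOrder (σ : Type*) where
  le : (σ →₀ ℕ) → (σ →₀ ℕ) → Prop
  trans : ∀ a b c, le a b → le b c → le a c
  antisymm : ∀ a b, le a b → le b a → a = b
  total : ∀ a b, le a b ∨ le b a
  zero_le : ∀ a, le 0 a
  add_le_add_right : ∀ a b c, le a b → le (a + c) (b + c)

/-- The initial ideal of `I` with respect to a term order `τ`. -/
noncomputable def initIdealLe {K : Type*} [CommRing K] {σ : Type*}
    (τ : TermOrder σ) (I : Ideal (MvPolynomial σ K)) : Ideal (MvPolynomial σ K) :=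
  Ideal.span {g : MvPolynomial σ K | ∃ f ∈ I, f ≠ 0 ∧ ∃ m : σ →₀ ℕ, m ∈ f.support ∧
    (∀ m' ∈ f.support, τ.le m' m) ∧ g = MvPolynomial.monomial m (1 : K)}

/-- An ideal is homogeneous (w.r.t. total degree) iff it contains all homogeneous
components of its elements. -/
def IsHomogIdeal {K : Type*} [CommSemiring K] {σ : Type*}
    (I : Ideal (MvPolynomial σ K)) : Prop :=
  ∀ f ∈ I, ∀ d : ℕ, MvPolynomial.homogeneousComponent d f ∈ I

/-- The reading order on boxes: rows top to bottom, each row right to left. -/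
def pdRel (p q : ℕ × ℕ) : Prop := p.1 < q.1 ∨ (p.1 = q.1 ∧ q.2 ≤ p.2)

instance : DecidableRel pdRel := fun p q => by unfold pdRel; infer_instance

instance : IsTrans (ℕ × ℕ) pdRel :=
  ⟨fun a b c hab hbc => by unfold pdRel at *; omega⟩

instance : IsAntisymm (ℕ × ℕ) pdRel :=
  ⟨fun a b hab hba => by
    unfold pdRel at hab hba
    exact Prod.ext_iff.mpr ⟨by omega, by omega⟩⟩

instance : IsTotal (ℕ × ℕ) pdRel :=
  ⟨fun a b => by unfold pdRel; omega⟩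

/-- The pipe dream reading word of a finite set `D` of boxes: the letters `i + j - 1`
over `(i, j) ∈ D`, in the order making `(i, -j)` increase lexicographically. -/
def pdWord (D : Finset (ℕ × ℕ)) : List ℕ :=
  (D.sort pdRel).map fun p => p.1 + p.2 - 1

/-- The product `s_{i_1} s_{i_2} ⋯ s_{i_l}` of simple transpositions. -/
def wordProd (l : List ℕ) : Equiv.Perm ℕ :=
  (l.map fun i => Equiv.swap i (i + 1)).prod

/-- `l` is a reduced word for `w`: a minimal-length word of positive letters whose
product of simple transpositions is `w`. -/
def IsReducedWordOf (w : Equiv.Perm ℕ) (l : List ℕ) : Prop :=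
  (∀ a ∈ l, 1 ≤ a) ∧ wordProd l = w ∧
    ∀ l' : List ℕ, (∀ a ∈ l', 1 ≤ a) → wordProd l' = w → l.length ≤ l'.length

/-- The set `RP(w)` of reduced pipe dreams for `w`. -/
def RP (w : Equiv.Perm ℕ) : Set (Finset (ℕ × ℕ)) :=
  {D | (∀ p ∈ D, 1 ≤ p.1 ∧ 1 ≤ p.2) ∧ IsReducedWordOf w (pdWord D)}

/-- `I^FPF_m`: involutions in `S_∞` that are fixed-point-free on `[m]` and fix
all `i > m`. -/
def IFPFm (m : ℕ) : Set (Equiv.Perm ℕ) :=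
  {y | y 0 = 0 ∧ y * y = 1 ∧ (∀ i, 1 ≤ i → i ≤ m → y i ≠ i) ∧ ∀ i, m < i → y i = i}

/-- `z = FPF_m(y)`: `z` agrees with `y` on `[m]` and swaps `m + 2k - 1, m + 2k`
for all `k ≥ 1`. -/
def IsFPFStdOf (m : ℕ) (y z : Equiv.Perm ℕ) : Prop :=
  (∀ i, i ≤ m → z i = y i) ∧
    ∀ k : ℕ, z (m + 2 * k + 1) = m + 2 * k + 2 ∧ z (m + 2 * k + 2) = m + 2 * k + 1

/-- The set `FP(z)` of fpf-involution pipe dreams for `z ∈ I^FPF_∞`. -/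
def FP (z : Equiv.Perm ℕ) : Set (Finset (ℕ × ℕ)) :=
  {E | ∃ (m : ℕ) (y : Equiv.Perm ℕ) (D : Finset (ℕ × ℕ)), Even m ∧ y ∈ IFPFm m ∧
    IsFPFStdOf m y z ∧ D ∈ RP y ∧ D.image Prod.swap = D ∧
    E = D.filter fun p => p.2 < p.1}

/-- The minor `det(U_{AB})` of the generic `m × n` matrix `U`, with rows `A` and
columns `B` listed in increasing order. -/
noncomputable def genMinor (K : Type*) [CommRing K] {m n : ℕ}
    (A : Finset (Fin m)) (B : Finset (Fin n)) (h : A.card = B.card) :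
    MvPolynomial (Fin m × Fin n) K :=
  (Matrix.of fun s t : Fin A.card =>
    (MvPolynomial.X (A.orderEmbOfFin rfl s, B.orderEmbOfFin h.symm t) :
      MvPolynomial (Fin m × Fin n) K)).det

/-- The antidiagonal monomial `u_{AB} = ∏_{(a,b) ∈ A ⊙ B} u_{ab}`. -/
noncomputable def genMon (K : Type*) [CommRing K] {m n : ℕ}
    (A : Finset (Fin m)) (B : Finset (Fin n)) (h : A.card = B.card) :
    MvPolynomial (Fin m × Fin n) K :=
  ∏ t : Fin A.card, MvPolynomial.X (A.orderEmbOfFin rfl t, B.orderEmbOfFin h.symm t.rev)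

/-- The exponent vector of the antidiagonal monomial `u_{AB}`. -/
noncomputable def antidiagExp {m n : ℕ} (A : Finset (Fin m)) (B : Finset (Fin n))
    (h : A.card = B.card) : (Fin m × Fin n) →₀ ℕ :=
  ∑ t : Fin A.card, Finsupp.single (A.orderEmbOfFin rfl t, B.orderEmbOfFin h.symm t.rev) 1

/-- The ideal `I_w`, generated by the minors `det(U_{AB})` with `A ⊆ [i]`, `B ⊆ [j]`,
`|A| = |B| = r_w(i,j) + 1` for some `(i,j) ∈ [m] × [n]`. -/
noncomputable def IwIdeal (K : Type*) [Field K] (m n : ℕ) (w : Equiv.Perm ℕ) :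
    Ideal (MvPolynomial (Fin m × Fin n) K) :=
  Ideal.span {g : MvPolynomial (Fin m × Fin n) K |
    ∃ (i j : ℕ) (A : Finset (Fin m)) (B : Finset (Fin n)) (h : A.card = B.card),
      1 ≤ i ∧ i ≤ m ∧ 1 ≤ j ∧ j ≤ n ∧ (∀ a ∈ A, (a : ℕ) + 1 ≤ i) ∧
      (∀ b ∈ B, (b : ℕ) + 1 ≤ j) ∧ A.card = rnk w i j + 1 ∧ g = genMinor K A B h}

/-- The monomial ideal `J_w`, generated by the monomials `u_{AB}` with `A ⊆ [i]`,
`B ⊆ [j]`, `|A| = |B| = r_w(i,j) + 1` for some `(i,j) ∈ [m] × [n]`. -/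
noncomputable def JwIdeal (K : Type*) [Field K] (m n : ℕ) (w : Equiv.Perm ℕ) :
    Ideal (MvPolynomial (Fin m × Fin n) K) :=
  Ideal.span {g : MvPolynomial (Fin m × Fin n) K |
    ∃ (i j : ℕ) (A : Finset (Fin m)) (B : Finset (Fin n)) (h : A.card = B.card),
      1 ≤ i ∧ i ≤ m ∧ 1 ≤ j ∧ j ≤ n ∧ (∀ a ∈ A, (a : ℕ) + 1 ≤ i) ∧
      (∀ b ∈ B, (b : ℕ) + 1 ≤ j) ∧ A.card = rnk w i j + 1 ∧ g = genMon K A B h}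

/-- The matrix Schubert variety
`X_w = {A ∈ Mat_{m×n} : rank A_{[i][j]} ≤ r_w(i,j) for all (i,j) ∈ [m] × [n]}`. -/
noncomputable def Xw (K : Type*) [Field K] (m n : ℕ) (w : Equiv.Perm ℕ) :
    Set (Matrix (Fin m) (Fin n) K) :=
  {A | ∀ (i j : ℕ) (hi : i ≤ m) (hj : j ≤ n), 1 ≤ i → 1 ≤ j →
    (A.submatrix (Fin.castLE hi) (Fin.castLE hj)).rank ≤ rnk w i j}

/-- `I(X_w)`: the ideal of polynomials vanishing on `X_w`. -/
noncomputable def IXw (K : Type*) [Field K] (m n : ℕ) (w : Equiv.Perm ℕ) :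
    Ideal (MvPolynomial (Fin m × Fin n) K) :=
  vanishingIdeal (Xw K m n w) fun A v => A v.1 v.2

/-- The variable `u_{pq}` (with `1 ≤ q < p ≤ n`) of `R_n`. -/
def ssvar {n : ℕ} (p q : ℕ) (hp : p ≤ n) (hq : 1 ≤ q) (hqp : q < p) : SSVar n :=
  ⟨(⟨p - 1, by omega⟩, ⟨q - 1, by omega⟩), Fin.mk_lt_mk.mpr (by omega)⟩

/-- Index set for the variables `u_{ij}`, `i > j ≥ 1`, over all positive integers. -/
abbrev PVar : Type := {p : ℕ × ℕ // 1 ≤ p.2 ∧ p.2 < p.1}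

/-- The generic skew-symmetric array `U^ss` over the positive integers:
`u_{xy}` if `x > y`, `-u_{yx}` if `x < y`, `0` if `x = y`. -/
noncomputable def UssP (K : Type*) [CommRing K] (x y : ℕ) : MvPolynomial PVar K :=
  if h : 1 ≤ y ∧ y < x then MvPolynomial.X ⟨(x, y), h⟩
  else if h' : 1 ≤ x ∧ x < y then -MvPolynomial.X ⟨(y, x), h'⟩
  else 0

/-- `pf(U^ss_{RR})` for a finite set `R` of positive integers. -/
noncomputable def pfUssP (K : Type*) [CommRing K] (R : Finset ℕ) : MvPolynomial PVar K :=
  Pfaffian (Matrix.of fun s t : Fin R.card =>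
    UssP K (R.orderEmbOfFin rfl s) (R.orderEmbOfFin rfl t))

/-- `g_{AB}`: the Pfaffian of the `(|B|+|A|) × (|B|+|A|)` skew-symmetric matrix whose
rows and columns are labeled by `B` (increasing) followed by `A` (increasing), with
entry `U^ss_{xy}` at a position labeled `(x, y)`, except that the entry is `0` when
both labels come from the `A`-block. -/
noncomputable def gAB (K : Type*) [CommRing K] (A B : Finset ℕ) : MvPolynomial PVar K :=
  Pfaffian ((Matrix.of fun p q : Fin B.card ⊕ Fin A.card =>
      match p, q with
      | Sum.inl s, Sum.inl t => UssP K (B.orderEmbOfFin rfl s) (B.orderEmbOfFin rfl t)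
      | Sum.inl s, Sum.inr t => UssP K (B.orderEmbOfFin rfl s) (A.orderEmbOfFin rfl t)
      | Sum.inr s, Sum.inl t => UssP K (A.orderEmbOfFin rfl s) (B.orderEmbOfFin rfl t)
      | Sum.inr _, Sum.inr _ => (0 : MvPolynomial PVar K)).submatrix
    finSumFinEquiv.symm finSumFinEquiv.symm)

/-- The exponent of the sign `⟨T, S⟩ = (-1)^{|S||T| + C(|S|,2) + ∑ of the (1-indexed)
positions in the increasing enumeration of `T` occupied by elements of `S`}`. -/
def setSgnExp (T S : Finset ℕ) : ℕ :=
  S.card * T.card + Nat.choose S.card 2 +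
    ∑ t : Fin T.card, if T.orderEmbOfFin rfl t ∈ S then (t : ℕ) + 1 else 0


/-- `S` contains an antidiagonal chain of size `k` inside `[i] × [j]`. -/
def HasChain (S : ℕ → ℕ → Prop) (i j k : ℕ) : Prop :=
  ∃ f g : ℕ → ℕ, (∀ t, t < k → S (f t) (g t) ∧ f t ≤ i ∧ g t ≤ j) ∧
    ∀ t, t + 1 < k → f (t + 1) < f t ∧ g t < g (t + 1)

theorem HasChain.zero (S : ℕ → ℕ → Prop) (i j : ℕ) : HasChain S i j 0 :=
  ⟨id, id, by simp, by simp⟩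

theorem HasChain.mono {S S' : ℕ → ℕ → Prop} {i j k i' j' k' : ℕ} (h : HasChain S i j k)
    (hS : ∀ a b, S a b → S' a b) (hi : i ≤ i') (hj : j ≤ j') (hk : k' ≤ k) :
    HasChain S' i' j' k' := by
  obtain ⟨f, g, h1, h2⟩ := h
  refine ⟨f, g, fun t ht => ?_, fun t ht => h2 t (by omega)⟩
  obtain ⟨a, b, c⟩ := h1 t (by omega)
  exact ⟨hS _ _ a, by omega, by omega⟩

theorem HasChain.dropCol {S : ℕ → ℕ → Prop} {i j k : ℕ} (h : HasChain S i (j + 1) (k + 1)) :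
    HasChain S i j k := by
  obtain ⟨f, g, h1, h2⟩ := h
  have hm : ∀ s t, t + s < k + 1 → g t ≤ g (t + s) := by
    intro s
    induction s with
    | zero => intro t _; simp
    | succ s ih =>
      intro t ht
      have := ih t (by omega)
      have := (h2 (t + s) (by omega)).2
      rw [← add_assoc]; omega
  refine ⟨f, g, fun t ht => ?_, fun t ht => h2 t (by omega)⟩
  obtain ⟨a, b, c⟩ := h1 t (by omega)
  have := (h2 t (by omega)).2
  have := (h1 (t + 1) (by omega)).2.2
  exact ⟨a, by omega, by omega⟩

theorem HasChain.dropRow {S : ℕ → ℕ → Prop} {i j k : ℕ} (h : HasChain S (i + 1) j (k + 1)) :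
    HasChain S i j k := by
  obtain ⟨f, g, h1, h2⟩ := h
  refine ⟨fun t => f (t + 1), fun t => g (t + 1), fun t ht => ?_,
    fun t ht => h2 (t + 1) (by omega)⟩
  obtain ⟨a, b, c⟩ := h1 (t + 1) (by omega)
  have := (h2 t (by omega)).1
  have := (h1 t (by omega)).2.1
  exact ⟨a, by show f (t + 1) ≤ i; omega, c⟩

theorem HasChain.splice {S : ℕ → ℕ → Prop} {i j k l s e : ℕ} {f g f' g' : ℕ → ℕ}
    (h1 : ∀ t, t < k → S (f t) (g t) ∧ f t ≤ i ∧ g t ≤ j)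
    (h2 : ∀ t, t + 1 < k → f (t + 1) < f t ∧ g t < g (t + 1))
    (h1' : ∀ t, s ≤ t → t < e → S (f' t) (g' t) ∧ f' t ≤ i ∧ g' t ≤ j)
    (h2' : ∀ t, s ≤ t → t + 1 < e → f' (t + 1) < f' t ∧ g' t < g' (t + 1))
    (hk : 0 < k) (hc : f' s < f (k - 1) ∧ g (k - 1) < g' s) (hl : l + s = k + e) :
    HasChain S i j l := by
  refine ⟨fun t => if t < k then f t else f' (t - k + s),
    fun t => if t < k then g t else g' (t - k + s), fun t ht => ?_, fun t ht => ?_⟩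
  · by_cases h : t < k
    · simpa [h] using h1 t h
    · simpa [h] using h1' (t - k + s) (by omega) (by omega)
  · rcases lt_trichotomy (t + 1) k with h | h | h
    · have : t < k := by omega
      simpa [h, this] using h2 t h
    · have h3 : t < k := by omega
      have h4 : ¬ (t + 1 < k) := by omega
      have h5 : t = k - 1 := by omega
      have h6 : t + 1 - k + s = s := by omega
      simp only [h3, h4, if_true, if_false, h6]
      rw [h5]; exact hc
    · have h3 : ¬ t < k := by omega
      have h4 : ¬ (t + 1 < k) := by omega
      have h6 : t + 1 - k + s = (t - k + s) + 1 := by omega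
      simp only [h3, h4, if_false, h6]
      exact h2' _ (by omega) (by omega)

theorem HasChain.cross {S : ℕ → ℕ → Prop} {i j k : ℕ} (hA : HasChain S i (j + 1) (k + 1))
    (hB : HasChain S (i + 1) j (k + 1)) (hn : ¬ HasChain S i j (k + 1)) :
    HasChain S (i + 1) (j + 1) (k + 2) := by
  obtain ⟨f1, g1, a1, a2⟩ := hA
  obtain ⟨f2, g2, b1, b2⟩ := hB
  by_contra hno
  have hX : ∀ t, t ≤ k → ¬ (f1 t < f2 t ∧ g2 t < g1 t) := by
    intro t ht hc
    apply hno
    refine HasChain.splice (k := t + 1) (s := t) (e := k + 1) (f := f2) (g := g2)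
      (f' := f1) (g' := g1) ?_ ?_ ?_ ?_ (by omega) (by simpa using hc) (by omega)
    · intro u hu
      obtain ⟨x, y, z⟩ := b1 u (by omega)
      exact ⟨x, by omega, by omega⟩
    · intro u hu
      exact b2 u (by omega)
    · intro u _ hu
      obtain ⟨x, y, z⟩ := a1 u (by omega)
      exact ⟨x, by omega, by omega⟩
    · intro u _ hu
      exact a2 u (by omega)
  have hY : ∀ t, t + 1 ≤ k → ¬ (f2 (t + 1) < f1 t ∧ g1 t < g2 (t + 1)) := by
    intro t ht hc
    apply hn
    refine HasChain.splice (k := t + 1) (s := t + 1) (e := k + 1) (f := f1) (g := g1)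
      (f' := f2) (g' := g2) ?_ ?_ ?_ ?_ (by omega) (by simpa using hc) (by omega)
    · intro u hu
      obtain ⟨x, y, z⟩ := a1 u (by omega)
      have := (a1 (u + 1) (by omega)).2.2
      have := (a2 u (by omega)).2
      exact ⟨x, by omega, by omega⟩
    · intro u hu
      exact a2 u (by omega)
    · intro u hs hu
      obtain ⟨x, y, z⟩ := b1 u (by omega)
      obtain ⟨v, rfl⟩ : ∃ v, u = v + 1 := ⟨u - 1, by omega⟩
      have := (b1 v (by omega)).2.1
      have := (b2 v (by omega)).1
      exact ⟨x, by omega, by omega⟩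
    · intro u _ hu
      exact b2 u (by omega)
  have hC : ∀ t, t ≤ k → g1 t ≤ g2 t := by
    intro t
    induction t with
    | zero =>
      intro _
      by_contra hlt
      apply hX 0 (by omega)
      refine ⟨?_, by omega⟩
      by_contra hf
      apply hn
      refine ⟨f2, g2, fun u hu => ?_, b2⟩
      obtain ⟨x, y, z⟩ := b1 u hu
      have h0 := (a1 0 (by omega)).2.1
      refine ⟨x, ?_, z⟩
      rcases u with _ | v
      · omega
      · have := (b1 v (by omega)).2.1
        have := (b2 v (by omega)).1
        omega
    | succ t ih =>
      intro ht
      have e1 := ih (by omega)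
      have e2 := b2 t (by omega)
      have e3 := hY t ht
      have e4 := hX (t + 1) ht
      have e5 := a2 t (by omega)
      by_contra hlt
      apply e4
      refine ⟨?_, by omega⟩
      by_contra hh
      exact e3 ⟨by omega, by omega⟩
  apply hn
  refine ⟨f1, g1, fun u hu => ?_, a2⟩
  obtain ⟨x, y, z⟩ := a1 u hu
  refine ⟨x, y, ?_⟩
  rcases Nat.lt_or_ge u k with h | h
  · have := (a1 (u + 1) (by omega)).2.2
    have := (a2 u (by omega)).2
    omega
  · have : u = k := by omega
    subst this
    have := hC u le_rfl
    have := (b1 u hu).2.2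
    omega

theorem HasChain.bound {S : ℕ → ℕ → Prop} (hS : ∀ a b, S a b → 1 ≤ a) {i j k : ℕ}
    (h : HasChain S i j k) : k ≤ i := by
  induction i generalizing k with
  | zero =>
    obtain ⟨f, g, h1, h2⟩ := h
    by_contra hk
    obtain ⟨a, b, c⟩ := h1 0 (by omega)
    have := hS _ _ a
    omega
  | succ i ih =>
    rcases k with _ | k
    · omega
    · have := ih h.dropRow
      omega

open Classical in
/-- maximal chain size -/
noncomputable def chainRk (S : ℕ → ℕ → Prop) (i j : ℕ) : ℕ := Nat.findGreatest (HasChain S i j) i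

theorem le_chainRk {S : ℕ → ℕ → Prop} (hS : ∀ a b, S a b → 1 ≤ a) {i j k : ℕ} :
    k ≤ chainRk S i j ↔ HasChain S i j k := by
  classical
  constructor
  · intro h
    have := Nat.findGreatest_spec (P := HasChain S i j) (Nat.zero_le i) (HasChain.zero S i j)
    exact this.mono (fun _ _ h => h) le_rfl le_rfl (by unfold chainRk at h; convert h)
  · intro h
    unfold chainRk
    exact Nat.le_findGreatest (h.bound hS) h

/-- axioms of the chain rank function that we use -/
structure RkLike (ρ : ℕ → ℕ → ℕ) : Prop where
  row : ∀ i j, ρ (i + 1) j ≤ ρ i j + 1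
  col : ∀ i j, ρ i (j + 1) ≤ ρ i j + 1
  sup : ∀ i j, ρ i (j + 1) + ρ (i + 1) j ≤ ρ i j + ρ (i + 1) (j + 1)

theorem rkLike_chainRk {S : ℕ → ℕ → Prop} (hS : ∀ a b, S a b → 1 ≤ a) :
    RkLike (chainRk S) := by
  have hrow : ∀ i j, chainRk S (i + 1) j ≤ chainRk S i j + 1 := by
    intro i j
    have h := (le_chainRk hS).1 (le_refl (chainRk S (i + 1) j))
    rcases hk : chainRk S (i + 1) j with _ | k
    · omega
    · rw [hk] at h
      have := (le_chainRk hS).2 h.dropRow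
      omega
  have hcol : ∀ i j, chainRk S i (j + 1) ≤ chainRk S i j + 1 := by
    intro i j
    have h := (le_chainRk hS).1 (le_refl (chainRk S i (j + 1)))
    rcases hk : chainRk S i (j + 1) with _ | k
    · omega
    · rw [hk] at h
      have := (le_chainRk hS).2 h.dropCol
      omega
  have hmono : ∀ i j i' j', i ≤ i' → j ≤ j' → chainRk S i j ≤ chainRk S i' j' := by
    intro i j i' j' hi hj
    exact (le_chainRk hS).2 (((le_chainRk hS).1 le_rfl).mono (fun _ _ h => h) hi hj le_rfl)
  refine ⟨hrow, hcol, fun i j => ?_⟩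
  have r := hrow i j
  have c := hcol i j
  have m1 := hmono i (j + 1) (i + 1) (j + 1) (by omega) le_rfl
  have m2 := hmono (i + 1) j (i + 1) (j + 1) le_rfl (by omega)
  by_cases h1 : chainRk S (i + 1) j ≤ chainRk S i j
  · omega
  by_cases h2 : chainRk S i (j + 1) ≤ chainRk S i j
  · omega
  have hA : HasChain S i (j + 1) (chainRk S i j + 1) := (le_chainRk hS).1 (by omega)
  have hB : HasChain S (i + 1) j (chainRk S i j + 1) := (le_chainRk hS).1 (by omega)
  have hn : ¬ HasChain S i j (chainRk S i j + 1) := fun h => by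
    have := (le_chainRk hS).2 h
    omega
  have := (le_chainRk hS).2 (HasChain.cross hA hB hn)
  omega

theorem RkLike.super {ρ : ℕ → ℕ → ℕ} (h : RkLike ρ) (i j s t : ℕ) :
    ρ i (j + t) + ρ (i + s) j ≤ ρ i j + ρ (i + s) (j + t) := by
  have h1 : ∀ i, ρ i (j + t) + ρ (i + 1) j ≤ ρ i j + ρ (i + 1) (j + t) := by
    intro i
    induction t with
    | zero => simp
    | succ t ih =>
      have := h.sup i (j + t)
      rw [← add_assoc]; omega
  induction s with
  | zero => simp; omega
  | succ s ih =>
    have := h1 (i + s)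
    rw [← add_assoc]; omega

theorem rnk_succ_row (w : Equiv.Perm ℕ) (i j : ℕ) :
    rnk w (i + 1) j = rnk w i j + if 1 ≤ w (i + 1) ∧ w (i + 1) ≤ j then 1 else 0 := by
  unfold rnk
  rw [← Finset.insert_Icc_right_eq_Icc_add_one (by omega), Finset.filter_insert]
  simp only [Finset.mem_Icc]
  split_ifs with h
  · rw [Finset.card_insert_of_notMem (by simp)]
  · rfl

theorem rnk_succ_col (w : Equiv.Perm ℕ) (i j : ℕ) :
    rnk w i (j + 1) = rnk w i j + if 1 ≤ w.symm (j + 1) ∧ w.symm (j + 1) ≤ i then 1 else 0 := by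
  induction i with
  | zero =>
    simp [rnk]
    omega
  | succ i ih =>
    rw [rnk_succ_row, rnk_succ_row, ih]
    have hh : w.symm (j + 1) = i + 1 ↔ w (i + 1) = j + 1 := by
      rw [Equiv.symm_apply_eq, eq_comm]
    split_ifs <;> omega

theorem bruhat {ρ : ℕ → ℕ → ℕ} (hρ : RkLike ρ) (w : Equiv.Perm ℕ) (w0 : w 0 = 0)
    (hle : ∀ i j, ρ i j ≤ rnk w i j) (p q : ℕ) (hp : 1 ≤ p) (hpq : w p = q)
    (hρpq : ρ p q < rnk w p q) :
    ∃ r, p < r ∧ q < w r ∧ ∀ i j, p ≤ i → i < r → q ≤ j → j < w r → ρ i j < rnk w i j := by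
  classical
  by_contra hcon
  push Not at hcon
  have key : ∀ r, p < r → q < w r →
      ∃ i j, p ≤ i ∧ i < r ∧ q ≤ j ∧ j < w r ∧ ρ i j = rnk w i j := by
    intro r h1 h2
    obtain ⟨i, j, a, b, c, d, e⟩ := hcon r h1 h2
    exact ⟨i, j, a, b, c, d, le_antisymm (hle i j) e⟩
  -- existence of a south-east point
  have hex : ∃ r, p < r ∧ q < w r := by
    by_contra hne
    push Not at hne
    have hinj : Set.InjOn w (Set.Ioi p) := w.injective.injOn
    have : (Set.Ioi p).Finite := Set.Finite.of_finite_image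
      ((Set.finite_Iic q).subset (by rintro _ ⟨r, hr, rfl⟩; exact hne r hr)) hinj
    exact Set.Ioi_infinite p this
  set r1 := Nat.find hex with hr1
  have hr1s := Nat.find_spec hex
  have hr1m : ∀ r, p < r → r < r1 → w r ≤ q := by
    intro r h1 h2
    have := Nat.find_min hex h2
    by_contra h
    exact this ⟨h1, by omega⟩
  have hex2 : ∃ j i, p ≤ i ∧ i < r1 ∧ q ≤ j ∧ ρ i j = rnk w i j := by
    obtain ⟨i, j, a, b, c, d, e⟩ := key r1 hr1s.1 hr1s.2
    exact ⟨j, i, a, b, c, e⟩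
  set j := Nat.find hex2 with hj
  obtain ⟨i, hi1, hi2, hjq, ht⟩ := Nat.find_spec hex2
  have hjm : ∀ j' i', j' < j → p ≤ i' → i' < r1 → q ≤ j' → ρ i' j' ≠ rnk w i' j' := by
    intro j' i' h1 h2 h3 h4 h5
    exact Nat.find_min hex2 h1 ⟨i', h2, h3, h4, h5⟩
  rw [← hj] at hjq ht
  by_cases hsmall : ∃ r, p < r ∧ q < w r ∧ w r ≤ j
  · set r' := Nat.find hsmall with hr'
    have hs := Nat.find_spec hsmall
    rw [← hr'] at hs
    obtain ⟨i', j', a, b, c, d, e⟩ := key r' hs.1 hs.2.1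
    have hi' : r1 ≤ i' := by
      by_contra h
      exact hjm j' i' (by omega) a (by omega) c e
    have hno : ∀ r, i < r → r ≤ i' → ¬ (j' < w r ∧ w r ≤ j) := by
      rintro r h1 h2 ⟨h3, h4⟩
      exact Nat.find_min hsmall (m := r) (by omega) ⟨by omega, by omega, h4⟩
    have hrect : ∀ s, i + s ≤ i' → rnk w (i + s) j + rnk w i j' = rnk w i j + rnk w (i + s) j' := by
      intro s
      induction s with
      | zero => intro _; simp
      | succ s ih =>
        intro hs'
        have h1 := ih (by omega)
        have h2 := rnk_succ_row w (i + s) j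
        have h3 := rnk_succ_row w (i + s) j'
        have h4 := hno (i + s + 1) (by omega) (by omega)
        rw [← add_assoc]
        split_ifs at h2 h3 <;> omega
    have h1 := hrect (i' - i) (by omega)
    have h2 := hρ.super i j' (i' - i) (j - j')
    rw [show i + (i' - i) = i' by omega] at h1 h2
    rw [show j' + (j - j') = j by omega] at h2
    have h3 := hle i' j
    have h4 := hle i j'
    exact hjm j' i (by omega) hi1 hi2 c (by omega)
  · push Not at hsmall
    have hcol : ∀ s, q + s ≤ j → ρ p (q + s) < rnk w p (q + s) := by
      intro s
      induction s with
      | zero => intro _; simpa using hρpq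
      | succ s ih =>
        intro hs
        have h1 := ih (by omega)
        have h2 := hρ.col p (q + s)
        have h3 := rnk_succ_col w p (q + s)
        have h4 : w (w.symm (q + s + 1)) = q + s + 1 := by simp
        have h5 : w.symm (q + s + 1) ≤ p := by
          by_contra h
          have := hsmall (w.symm (q + s + 1)) (by omega) (by omega)
          omega
        have h6 : 1 ≤ w.symm (q + s + 1) := by
          by_contra h
          have h7 : w.symm (q + s + 1) = 0 := by omega
          rw [h7, w0] at h4
          omega
        rw [if_pos ⟨h6, h5⟩] at h3
        rw [← add_assoc]; omega
    have hrow : ∀ s, p + s < r1 → ρ (p + s) j < rnk w (p + s) j := by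
      intro s
      induction s with
      | zero =>
        intro _
        have := hcol (j - q) (by omega)
        rw [show q + (j - q) = j by omega] at this
        simpa using this
      | succ s ih =>
        intro hs
        have h1 := ih (by omega)
        have h2 := hρ.row (p + s) j
        have h3 := rnk_succ_row w (p + s) j
        have h5 : w (p + s + 1) ≤ q := hr1m _ (by omega) (by omega)
        have h6 : 1 ≤ w (p + s + 1) := by
          by_contra h
          have h7 : w (p + s + 1) = w 0 := by omega
          have := w.injective h7
          omega
        rw [if_pos ⟨h6, by omega⟩] at h3
        rw [← add_assoc]; omega
    have := hrow (i - p) (by omega)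
    rw [show p + (i - p) = i by omega] at this
    omega

theorem rnk_swap (w : Equiv.Perm ℕ) (p r : ℕ) (hp : 1 ≤ p) (hw : 1 ≤ w p) (hr : p < r)
    (hq : w p < w r) (i j : ℕ) :
    rnk w i j = rnk (w * Equiv.swap p r) i j +
      if p ≤ i ∧ i < r ∧ w p ≤ j ∧ j < w r then 1 else 0 := by
  induction i with
  | zero =>
    simp [rnk]
    omega
  | succ i ih =>
    rw [rnk_succ_row, rnk_succ_row, ih]
    rcases eq_or_ne (i + 1) p with h | h
    · have hv : (w * Equiv.swap p r) (i + 1) = w r := by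
        rw [Equiv.Perm.mul_apply, h, Equiv.swap_apply_left]
      have hw' : w (i + 1) = w p := by rw [h]
      split_ifs <;> omega
    · rcases eq_or_ne (i + 1) r with h' | h'
      · have hv : (w * Equiv.swap p r) (i + 1) = w p := by
          rw [Equiv.Perm.mul_apply, h', Equiv.swap_apply_right]
        have hw' : w (i + 1) = w r := by rw [h']
        split_ifs <;> omega
      · have hv : (w * Equiv.swap p r) (i + 1) = w (i + 1) := by
          rw [Equiv.Perm.mul_apply, Equiv.swap_apply_of_ne_of_ne h h']
        split_ifs <;> omega

/-- The support of an exponent vector, as a 1-indexed relation. -/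
def dS {m n : ℕ} (d : (Fin m × Fin n) →₀ ℕ) : ℕ → ℕ → Prop :=
  fun i j => ∃ (a : Fin m) (b : Fin n), i = a + 1 ∧ j = b + 1 ∧ d (a, b) ≠ 0

theorem dS_pos {m n : ℕ} (d : (Fin m × Fin n) →₀ ℕ) : ∀ a b, dS d a b → 1 ≤ a := by
  rintro _ _ ⟨a, b, rfl, rfl, _⟩; omega

theorem dS_mono {m n : ℕ} {d e : (Fin m × Fin n) →₀ ℕ} (h : d ≤ e) :
    ∀ a b, dS d a b → dS e a b := by
  rintro _ _ ⟨a, b, rfl, rfl, hd⟩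
  refine ⟨a, b, rfl, rfl, ?_⟩
  have := h (a, b)
  omega

/-- the monomial with exponent `d` is standard for `J_w` -/
def Good {m n : ℕ} (w : Equiv.Perm ℕ) (d : (Fin m × Fin n) →₀ ℕ) : Prop :=
  ∀ i j, 1 ≤ i → i ≤ m → 1 ≤ j → j ≤ n → ¬ HasChain (dS d) i j (rnk w i j + 1)

theorem Good.mono {m n : ℕ} {w : Equiv.Perm ℕ} {d e : (Fin m × Fin n) →₀ ℕ} (h : Good w e)
    (hle : d ≤ e) : Good w d :=
  fun i j h1 h2 h3 h4 hc => h i j h1 h2 h3 h4 (hc.mono (dS_mono hle) le_rfl le_rfl le_rfl)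

theorem rnk_mono (w : Equiv.Perm ℕ) {i j i' j' : ℕ} (hi : i ≤ i') (hj : j ≤ j') :
    rnk w i j ≤ rnk w i' j' := by
  unfold rnk
  apply Finset.card_le_card
  intro a
  simp only [Finset.mem_filter, Finset.mem_Icc]
  omega

theorem Good.le {m n : ℕ} {w : Equiv.Perm ℕ} {d : (Fin m × Fin n) →₀ ℕ} (h : Good w d) (i j : ℕ) :
    chainRk (dS d) i j ≤ rnk w i j := by
  by_contra hlt
  have hc : HasChain (dS d) i j (rnk w i j + 1) := (le_chainRk (dS_pos d)).1 (by omega)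
  have hc' : HasChain (dS d) (min i m) (min j n) (rnk w i j + 1) := by
    obtain ⟨f, g, h1, h2⟩ := hc
    refine ⟨f, g, fun t ht => ?_, h2⟩
    obtain ⟨x, y, z⟩ := h1 t ht
    refine ⟨x, ?_, ?_⟩
    · obtain ⟨a, b, e1, e2, _⟩ := x
      omega
    · obtain ⟨a, b, e1, e2, _⟩ := x
      omega
  have hpos : 1 ≤ min i m ∧ 1 ≤ min j n := by
    obtain ⟨f, g, h1, h2⟩ := hc'
    obtain ⟨⟨a, b, e1, e2, _⟩, y, z⟩ := h1 0 (by omega)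
    omega
  refine h (min i m) (min j n) hpos.1 (by omega) hpos.2 (by omega)
    (hc'.mono (fun _ _ h => h) le_rfl le_rfl ?_)
  have := rnk_mono w (min_le_left i m) (min_le_left j n)
  omega

theorem antidiagExp_le {m n k : ℕ} (A : Finset (Fin m)) (B : Finset (Fin n)) (hA : A.card = k)
    (hB : B.card = k) (h : A.card = B.card) (d : (Fin m × Fin n) →₀ ℕ)
    (hd : ∀ t : Fin k, d (A.orderEmbOfFin hA t, B.orderEmbOfFin hB t.rev) ≠ 0) :
    antidiagExp A B h ≤ d := by
  subst hA
  intro v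
  unfold antidiagExp
  rw [Finsupp.finsetSum_apply]
  by_cases hv : ∃ t : Fin A.card, (A.orderEmbOfFin rfl t, B.orderEmbOfFin h.symm t.rev) = v
  · obtain ⟨t, rfl⟩ := hv
    rw [Finset.sum_eq_single t]
    · have := hd t
      rw [Finsupp.single_eq_same]
      omega
    · intro b _ hb
      rw [Finsupp.single_apply, if_neg]
      intro he
      apply hb
      have := congrArg Prod.fst he
      exact (A.orderEmbOfFin rfl).injective this
    · simp
  · rw [Finset.sum_eq_zero]
    · omega
    · intro t _
      rw [Finsupp.single_apply, if_neg]
      exact fun he => hv ⟨t, he⟩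

theorem exists_antidiag {m n : ℕ} {w : Equiv.Perm ℕ} {d : (Fin m × Fin n) →₀ ℕ}
    (hd : ¬ Good w d) :
    ∃ (i j : ℕ) (A : Finset (Fin m)) (B : Finset (Fin n)) (h : A.card = B.card),
      (1 ≤ i ∧ i ≤ m ∧ 1 ≤ j ∧ j ≤ n ∧ (∀ a ∈ A, (a : ℕ) + 1 ≤ i) ∧
      (∀ b ∈ B, (b : ℕ) + 1 ≤ j) ∧ A.card = rnk w i j + 1) ∧ antidiagExp A B h ≤ d := by
  unfold Good at hd
  push Not at hd
  obtain ⟨i, j, h1, h2, h3, h4, f, g, c1, c2⟩ := hd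
  set k := rnk w i j + 1 with hk
  have hS : ∀ t : Fin k, ∃ (a : Fin m) (b : Fin n), f t = a + 1 ∧ g t = b + 1 ∧ d (a, b) ≠ 0 :=
    fun t => (c1 t t.2).1
  choose F G hF hG hFG using hS
  have mf : ∀ s t, t + s + 1 < k → f (t + s + 1) < f t ∧ g t < g (t + s + 1) := by
    intro s
    induction s with
    | zero => intro t ht; exact c2 t ht
    | succ s ih =>
      intro t ht
      have e1 := ih t (by omega)
      have e2 := c2 (t + s + 1) (by omega)
      constructor
      · exact lt_trans e2.1 e1.1
      · exact lt_trans e1.2 e2.2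
  have mFG : ∀ s t : Fin k, s < t → F t < F s ∧ G s < G t := by
    intro s t hst
    have hst' : (s : ℕ) < t := hst
    have := mf (t - s - 1) s (by omega)
    rw [show (s : ℕ) + (t - s - 1) + 1 = t by omega, hF, hF, hG, hG] at this
    constructor
    · rw [Fin.lt_def]; omega
    · rw [Fin.lt_def]; omega
  have hF' : StrictMono (fun t : Fin k => F t.rev) := by
    intro s t hst
    exact (mFG t.rev s.rev (Fin.rev_lt_rev.2 hst)).1
  have hG' : StrictMono G := fun s t hst => (mFG s t hst).2
  set A := Finset.univ.image (fun t : Fin k => F t.rev) with hA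
  set B := Finset.univ.image G with hB
  have cA : A.card = k := by
    rw [hA, Finset.card_image_of_injective _ hF'.injective]; simp
  have cB : B.card = k := by
    rw [hB, Finset.card_image_of_injective _ hG'.injective]; simp
  have uA := Finset.orderEmbOfFin_unique cA (f := fun t : Fin k => F t.rev)
    (fun t => Finset.mem_image_of_mem _ (Finset.mem_univ t)) hF'
  have uB := Finset.orderEmbOfFin_unique cB (f := G)
    (fun t => Finset.mem_image_of_mem _ (Finset.mem_univ t)) hG'
  refine ⟨i, j, A, B, cA.trans cB.symm, ⟨h1, h2, h3, h4, ?_, ?_, cA⟩, ?_⟩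
  · intro a ha
    obtain ⟨t, _, rfl⟩ := Finset.mem_image.1 ha
    have := (c1 t.rev (t.rev).2).2.1
    rw [hF] at this
    exact this
  · intro a ha
    obtain ⟨t, _, rfl⟩ := Finset.mem_image.1 ha
    have := (c1 t t.2).2.2
    rw [hG] at this
    exact this
  · apply antidiagExp_le A B cA cB
    intro t
    rw [← uA, ← uB]
    exact hFG t.rev

theorem good_swap {m n : ℕ} {w : Equiv.Perm ℕ} (w0 : w 0 = 0) (p : Fin m) (q : Fin n)
    (hpq : w ((p : ℕ) + 1) = (q : ℕ) + 1) (hmin : ∀ a : ℕ, 1 ≤ a → a ≤ (p : ℕ) → n < w a)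
    {d : (Fin m × Fin n) →₀ ℕ} (hd : Good w d) (hdpq : d (p, q) = 0) :
    ∃ r, (p : ℕ) + 1 < r ∧ w (p + 1) < w r ∧ Good (w * Equiv.swap ((p : ℕ) + 1) r) d := by
  have hz : ∀ i j, i ≤ (p : ℕ) + 1 → j ≤ (q : ℕ) + 1 → ¬ (i = p + 1 ∧ j = q + 1) →
      rnk w i j = 0 := by
    intro i j hi hj hne
    unfold rnk
    rw [Finset.card_eq_zero, Finset.filter_eq_empty_iff]
    intro a ha hw
    rw [Finset.mem_Icc] at ha hw
    rcases Nat.lt_or_ge p a with h | h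
    · have : a = p + 1 := by omega
      subst this
      omega
    · have := hmin a ha.1 h
      omega
  have h1 : 1 ≤ rnk w (p + 1) (q + 1) := by
    unfold rnk
    rw [Nat.one_le_iff_ne_zero, Finset.card_ne_zero]
    refine ⟨p + 1, ?_⟩
    simp [hpq]
  have h0 : chainRk (dS d) (p + 1) (q + 1) = 0 := by
    by_contra hne
    have hc : HasChain (dS d) (p + 1) (q + 1) 1 := (le_chainRk (dS_pos d)).1 (by omega)
    obtain ⟨f, g, c1, c2⟩ := hc
    obtain ⟨⟨a, b, e1, e2, e3⟩, y, z⟩ := c1 0 (by omega)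
    have hr := hz (a + 1) (b + 1) (by omega) (by omega) (by
      rintro ⟨x1, x2⟩
      have ha : a = p := Fin.ext (by omega)
      have hb : b = q := Fin.ext (by omega)
      subst ha hb
      exact e3 hdpq)
    apply hd (a + 1) (b + 1) (by omega) (by omega) (by omega) (by omega)
    rw [hr]
    exact ⟨fun _ => a + 1, fun _ => b + 1, fun t _ => ⟨⟨a, b, rfl, rfl, e3⟩, le_rfl, le_rfl⟩,
      fun t ht => by omega⟩
  obtain ⟨r, hr1, hr2, hr3⟩ := bruhat (rkLike_chainRk (dS_pos d)) w w0 hd.le (p + 1) (q + 1)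
    (by omega) hpq (by omega)
  refine ⟨r, hr1, by omega, fun i j _ _ _ _ hc => ?_⟩
  have e1 := (le_chainRk (dS_pos d)).2 hc
  have e2 := hd.le i j
  have e3 := rnk_swap w (p + 1) r (by omega) (by omega) hr1 (by omega) i j
  split_ifs at e3 with hif
  · have := hr3 i j hif.1 hif.2.1 (by omega) hif.2.2.2
    omega
  · omega

theorem TermOrder.le_of_le {σ : Type*} (τ : TermOrder σ) {a b : σ →₀ ℕ} (h : a ≤ b) :
    τ.le a b := by
  obtain ⟨c, rfl⟩ := exists_add_of_le h
  have := τ.add_le_add_right 0 c a (τ.zero_le c)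
  rwa [zero_add, add_comm] at this

theorem TermOrder.refl {σ : Type*} (τ : TermOrder σ) (a : σ →₀ ℕ) : τ.le a a :=
  τ.le_of_le le_rfl

theorem TermOrder.wf {σ : Type*} [Finite σ] (τ : TermOrder σ) :
    WellFounded (fun a b : σ →₀ ℕ => τ.le a b ∧ a ≠ b) := by
  rw [wellFounded_iff_isEmpty_descending_chain]
  refine ⟨fun ⟨f, hf⟩ => ?_⟩
  obtain ⟨i, j, hij, hle⟩ := wellQuasiOrdered_le (α := σ →₀ ℕ) f
  have h1 : ∀ s, τ.le (f (i + s + 1)) (f (i + 1)) := by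
    intro s
    induction s with
    | zero => exact τ.refl _
    | succ s ih => exact τ.trans _ _ _ (hf (i + s + 1)).1 ih
  have h2 := h1 (j - i - 1)
  rw [show i + (j - i - 1) + 1 = j by omega] at h2
  have h3 := τ.trans _ _ _ (τ.le_of_le hle) h2
  exact (hf i).2 (τ.antisymm _ _ (hf i).1 h3)

theorem TermOrder.exists_max {σ : Type*} (τ : TermOrder σ) (s : Finset (σ →₀ ℕ))
    (hs : s.Nonempty) : ∃ a ∈ s, ∀ b ∈ s, τ.le b a := by
  classical
  induction hs using Finset.Nonempty.cons_induction with
  | singleton a => exact ⟨a, by simp, by simp [τ.refl]⟩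
  | cons a s ha hs ih =>
    obtain ⟨b, hb, hm⟩ := ih
    rcases τ.total a b with h | h
    · refine ⟨b, by simp [hb], fun c hc => ?_⟩
      rcases Finset.mem_cons.1 hc with rfl | hc
      · exact h
      · exact hm c hc
    · refine ⟨a, by simp, fun c hc => ?_⟩
      rcases Finset.mem_cons.1 hc with rfl | hc
      · exact τ.refl _
      · exact τ.trans _ _ _ (hm c hc) h

/-- the matrix parametrizing the orbit of `w` -/
noncomputable def Mxy {K : Type*} [CommRing K] (w : Equiv.Perm ℕ) (x y : ℕ → ℕ → K) (i j : ℕ) : K :=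
  ∑ a ∈ (Finset.Icc 1 i).filter (fun a => w a ∈ Finset.Icc 1 j), x i a * y a j

/-- parametrization on coordinate rings -/
noncomputable def phi (K : Type*) [Field K] (m n : ℕ) (w : Equiv.Perm ℕ) :
    MvPolynomial (Fin m × Fin n) K →ₐ[K] MvPolynomial ((ℕ × ℕ) ⊕ (ℕ × ℕ)) K :=
  MvPolynomial.aeval fun v => Mxy w (fun i a => MvPolynomial.X (Sum.inl (i, a)))
    (fun a j => MvPolynomial.X (Sum.inr (a, j))) (v.1 + 1) (v.2 + 1)

/-- the prime ideal of the closure of the orbit of `w` -/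
noncomputable def Pw (K : Type*) [Field K] (m n : ℕ) (w : Equiv.Perm ℕ) :
    Ideal (MvPolynomial (Fin m × Fin n) K) := RingHom.ker (phi K m n w)

instance Pw_prime (K : Type*) [Field K] (m n : ℕ) (w : Equiv.Perm ℕ) : (Pw K m n w).IsPrime :=
  RingHom.ker_isPrime _

theorem mem_Pw {K : Type*} [Field K] [Infinite K] {m n : ℕ} {w : Equiv.Perm ℕ}
    {f : MvPolynomial (Fin m × Fin n) K} :
    f ∈ Pw K m n w ↔ ∀ x y : ℕ → ℕ → K,
      MvPolynomial.eval (fun v : Fin m × Fin n => Mxy w x y (v.1 + 1) (v.2 + 1)) f = 0 := by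
  have key : ∀ z : ((ℕ × ℕ) ⊕ (ℕ × ℕ)) → K, MvPolynomial.eval z (phi K m n w f) =
      MvPolynomial.eval (fun v : Fin m × Fin n => Mxy w (fun i a => z (Sum.inl (i, a)))
        (fun a j => z (Sum.inr (a, j))) (v.1 + 1) (v.2 + 1)) f := by
    intro z
    have : ((MvPolynomial.aeval z).comp (phi K m n w) : _ →ₐ[K] K) =
      MvPolynomial.aeval (fun v : Fin m × Fin n => Mxy w (fun i a => z (Sum.inl (i, a)))
        (fun a j => z (Sum.inr (a, j))) (v.1 + 1) (v.2 + 1)) := by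
      apply MvPolynomial.algHom_ext
      intro v
      simp [phi, Mxy]
    have h := congrArg (fun F : MvPolynomial (Fin m × Fin n) K →ₐ[K] K => F f) this
    simpa [MvPolynomial.coe_aeval_eq_eval] using h
  unfold Pw
  rw [RingHom.mem_ker]
  constructor
  · intro h x y
    have := key (Sum.elim (fun u => x u.1 u.2) (fun u => y u.1 u.2))
    have h0 : phi K m n w f = 0 := h
    rw [h0, map_zero] at this
    exact this.symm
  · intro h
    apply MvPolynomial.funext
    intro z
    rw [map_zero]
    exact (key z).trans (h _ _)

theorem Mxy_eq {K : Type*} [CommRing K] (w : Equiv.Perm ℕ) (w0 : w 0 = 0) (x y : ℕ → ℕ → K)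
    (i j N : ℕ) (h : i ≤ N) :
    Mxy w x y i j = ∑ a ∈ Finset.Icc 1 N, if a ≤ i ∧ w a ≤ j then x i a * y a j else 0 := by
  unfold Mxy
  rw [← Finset.sum_filter]
  apply Finset.sum_congr _ (fun _ _ => rfl)
  ext a
  simp only [Finset.mem_filter, Finset.mem_Icc]
  have : 1 ≤ a → 1 ≤ w a := by
    intro ha
    by_contra hc
    have : w a = w 0 := by omega
    have := w.injective this
    omega
  constructor
  · rintro ⟨⟨h1, h2⟩, h3, h4⟩
    exact ⟨⟨h1, by omega⟩, h2, h4⟩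
  · rintro ⟨⟨h1, h2⟩, h3, h4⟩
    exact ⟨⟨h1, h3⟩, this h1, h4⟩

theorem Mxy_swap {K : Type*} [Field K] (w : Equiv.Perm ℕ) (w0 : w 0 = 0) (x y : ℕ → ℕ → K)
    (p r : ℕ) (hp : 1 ≤ p) (hr : p < r) (hq : w p < w r) (t : K) (ht : t ≠ 0) :
    ∃ x' y' : ℕ → ℕ → K, ∀ i j, Mxy w x' y' i j = Mxy (w * Equiv.swap p r) x y i j +
      t * (if p ≤ i ∧ w p ≤ j then x i p * y r j else 0) := by
  refine ⟨fun i a => if a = p then t⁻¹ * (t * x i p + if r ≤ i then x i r else 0)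
      else if a = r then - t⁻¹ * (if r ≤ i then x i r else 0) else x i a,
    fun a j => if a = p then t * y r j + (if w r ≤ j then y p j else 0)
      else if a = r then (if w r ≤ j then y p j else 0) else y a j, fun i j => ?_⟩
  have hv0 : (w * Equiv.swap p r) 0 = 0 := by
    rw [Equiv.Perm.mul_apply, Equiv.swap_apply_of_ne_of_ne (by omega) (by omega), w0]
  have hvp : (w * Equiv.swap p r) p = w r := by
    rw [Equiv.Perm.mul_apply, Equiv.swap_apply_left]
  have hvr : (w * Equiv.swap p r) r = w p := by
    rw [Equiv.Perm.mul_apply, Equiv.swap_apply_right]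
  have hva : ∀ a, a ≠ p → a ≠ r → (w * Equiv.swap p r) a = w a := by
    intro a h1 h2
    rw [Equiv.Perm.mul_apply, Equiv.swap_apply_of_ne_of_ne h1 h2]
  generalize w * Equiv.swap p r = v at *
  have hN1 : i ≤ max i r := le_max_left _ _
  have mp : p ∈ Finset.Icc 1 (max i r) := by
    rw [Finset.mem_Icc]; have := le_max_right i r; omega
  have mr : r ∈ (Finset.Icc 1 (max i r)).erase p := by
    rw [Finset.mem_erase, Finset.mem_Icc]; have := le_max_right i r; omega
  rw [Mxy_eq w w0 _ _ i j _ hN1, Mxy_eq v hv0 _ _ i j _ hN1]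
  rw [← Finset.add_sum_erase _ _ mp, ← Finset.add_sum_erase _ _ mr]
  conv_rhs => rw [← Finset.add_sum_erase _ _ mp, ← Finset.add_sum_erase _ _ mr]
  have hrest : ∀ F G : ℕ → K, (∀ a, a ≠ p → a ≠ r → F a = G a) →
      ∑ a ∈ ((Finset.Icc 1 (max i r)).erase p).erase r, F a =
      ∑ a ∈ ((Finset.Icc 1 (max i r)).erase p).erase r, G a := by
    intro F G h
    apply Finset.sum_congr rfl
    intro a ha
    rw [Finset.mem_erase, Finset.mem_erase] at ha
    exact h a ha.2.1 ha.1
  rw [hrest (fun a => if a ≤ i ∧ w a ≤ j then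
      (if a = p then t⁻¹ * (t * x i p + if r ≤ i then x i r else 0)
      else if a = r then - t⁻¹ * (if r ≤ i then x i r else 0) else x i a) *
      (if a = p then t * y r j + (if w r ≤ j then y p j else 0)
      else if a = r then (if w r ≤ j then y p j else 0) else y a j) else 0)
    (fun a => if a ≤ i ∧ v a ≤ j then x i a * y a j else 0) (by
      intro a h1 h2
      simp only [h1, h2, if_false, hva a h1 h2])]
  have hrp : r ≠ p := by omega
  simp only [hrp, if_true, if_false, hvp, hvr]
  generalize (Finset.sum (((Finset.Icc 1 (max i r)).erase p).erase r) fun a => if a ≤ i ∧ v a ≤ j then x i a * y a j else 0) = R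
  by_cases c1 : p ≤ i <;> by_cases c2 : r ≤ i <;> by_cases c3 : w p ≤ j <;>
    by_cases c4 : w r ≤ j <;> first
      | (exfalso; omega)
      | (simp only [c1, c2, c3, c4, and_self, and_true, true_and, and_false, false_and, if_true,
          if_false]
         field_simp
         ring)
      | (simp [c1, c2, c3, c4])

theorem Pw_le_swap {K : Type*} [Field K] [Infinite K] (m n : ℕ) (w : Equiv.Perm ℕ) (w0 : w 0 = 0)
    (p r : ℕ) (hp : 1 ≤ p) (hr : p < r) (hq : w p < w r) :
    Pw K m n w ≤ Pw K m n (w * Equiv.swap p r) := by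
  intro f hf
  rw [mem_Pw] at hf ⊢
  intro x y
  set E : Fin m × Fin n → K := fun v =>
    if p ≤ (v.1 : ℕ) + 1 ∧ w p ≤ (v.2 : ℕ) + 1 then x (v.1 + 1) p * y r (v.2 + 1) else 0 with hE
  set H : Polynomial K := MvPolynomial.aeval (fun v : Fin m × Fin n =>
    Polynomial.C (Mxy (w * Equiv.swap p r) x y (v.1 + 1) (v.2 + 1)) +
      Polynomial.C (E v) * Polynomial.X) f with hH
  have hev : ∀ t : K, Polynomial.eval t H = MvPolynomial.eval (fun v : Fin m × Fin n =>
      Mxy (w * Equiv.swap p r) x y (v.1 + 1) (v.2 + 1) + E v * t) f := by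
    intro t
    have : ((Polynomial.aeval t).comp (MvPolynomial.aeval (fun v : Fin m × Fin n =>
      Polynomial.C (Mxy (w * Equiv.swap p r) x y (v.1 + 1) (v.2 + 1)) +
      Polynomial.C (E v) * Polynomial.X)) : MvPolynomial (Fin m × Fin n) K →ₐ[K] K) =
      MvPolynomial.aeval (fun v : Fin m × Fin n =>
      Mxy (w * Equiv.swap p r) x y (v.1 + 1) (v.2 + 1) + E v * t) := by
      apply MvPolynomial.algHom_ext
      intro v
      simp
    have h := congrArg (fun F : MvPolynomial (Fin m × Fin n) K →ₐ[K] K => F f) this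
    simpa [MvPolynomial.coe_aeval_eq_eval, Polynomial.coe_aeval_eq_eval] using h
  have hz : H = 0 := by
    apply Polynomial.eq_zero_of_infinite_isRoot
    refine Set.Infinite.mono (s := {t : K | t ≠ 0}) ?_ ?_
    · intro t ht
      show Polynomial.eval t H = 0
      rw [hev t]
      obtain ⟨x', y', h⟩ := Mxy_swap w w0 x y p r hp hr hq t ht
      have := hf x' y'
      simpa only [h, hE, mul_comm t] using this
    · exact (Set.finite_singleton (0 : K)).infinite_compl
  have := hev 0
  rw [hz] at this
  simpa using this.symm

theorem Iw_le_IXw (K : Type*) [Field K] (m n : ℕ) (w : Equiv.Perm ℕ) :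
    IwIdeal K m n w ≤ IXw K m n w := by
  unfold IwIdeal
  rw [Ideal.span_le]
  rintro _ ⟨i, j, A, B, h, h1, h2, h3, h4, hA, hB, hc, rfl⟩
  show ∀ M ∈ Xw K m n w, MvPolynomial.eval (fun v => M v.1 v.2) (genMinor K A B h) = 0
  intro M hM
  have hdet : MvPolynomial.eval (fun v => M v.1 v.2) (genMinor K A B h) =
      (Matrix.of fun s t : Fin A.card =>
        M (A.orderEmbOfFin rfl s) (B.orderEmbOfFin h.symm t)).det := by
    unfold genMinor
    rw [RingHom.map_det]
    congr 1
    ext s t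
    simp
  rw [hdet]
  by_contra hne
  have r1 := Matrix.rank_of_isUnit _ ((Matrix.isUnit_iff_isUnit_det _).2 (isUnit_iff_ne_zero.2 hne))
  have r2 := Matrix.rank_submatrix_le (M.submatrix (Fin.castLE h2) (Fin.castLE h4))
    (fun s : Fin A.card => (⟨A.orderEmbOfFin rfl s,
      hA _ (Finset.orderEmbOfFin_mem A rfl s)⟩ : Fin i))
    (fun s : Fin A.card => (⟨B.orderEmbOfFin h.symm s,
      hB _ (Finset.orderEmbOfFin_mem B h.symm s)⟩ : Fin j))
  have r3 := hM i j h2 h4 h1 h3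
  have r4 : ((M.submatrix (Fin.castLE h2) (Fin.castLE h4)).submatrix
    (fun s : Fin A.card => (⟨A.orderEmbOfFin rfl s,
      hA _ (Finset.orderEmbOfFin_mem A rfl s)⟩ : Fin i))
    (fun s : Fin A.card => (⟨B.orderEmbOfFin h.symm s,
      hB _ (Finset.orderEmbOfFin_mem B h.symm s)⟩ : Fin j))) = (Matrix.of fun s t : Fin A.card =>
        M (A.orderEmbOfFin rfl s) (B.orderEmbOfFin h.symm t)) := rfl
  rw [r4, r1, Fintype.card_fin] at r2
  omega

theorem Mxy_mem_Xw {K : Type*} [Field K] (m n : ℕ) (w : Equiv.Perm ℕ) (x y : ℕ → ℕ → K) :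
    (Matrix.of fun (a : Fin m) (b : Fin n) => Mxy w x y (a + 1) (b + 1)) ∈ Xw K m n w := by
  intro i j hi hj _ _
  set T := (Finset.Icc 1 i).filter (fun a => w a ∈ Finset.Icc 1 j) with hT
  set P : Matrix (Fin i) T K := Matrix.of fun a t => if (t : ℕ) ≤ a + 1 then x (a + 1) t else 0
    with hP
  set Q : Matrix T (Fin j) K := Matrix.of fun t b => if w t ≤ b + 1 then y t (b + 1) else 0
    with hQ
  have : (Matrix.of fun (a : Fin m) (b : Fin n) => Mxy w x y (a + 1) (b + 1)).submatrix
      (Fin.castLE hi) (Fin.castLE hj) = P * Q := by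
    ext a b
    rw [Matrix.mul_apply]
    simp only [Matrix.submatrix_apply, Matrix.of_apply, hP, hQ, Fin.val_castLE]
    rw [Finset.sum_coe_sort T (fun t => (if t ≤ (a : ℕ) + 1 then x (a + 1) t else 0) *
      (if w t ≤ (b : ℕ) + 1 then y t (b + 1) else 0))]
    unfold Mxy
    have e : (Finset.Icc 1 ((a : ℕ) + 1)).filter (fun t => w t ∈ Finset.Icc 1 ((b : ℕ) + 1)) =
        T.filter (fun t => t ≤ (a : ℕ) + 1 ∧ w t ≤ (b : ℕ) + 1) := by
      ext t
      simp only [hT, Finset.mem_filter, Finset.mem_Icc]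
      omega
    rw [e, Finset.sum_filter]
    apply Finset.sum_congr rfl
    intro t _
    by_cases c1 : t ≤ (a : ℕ) + 1 <;> by_cases c2 : w t ≤ (b : ℕ) + 1 <;> simp [c1, c2]
  rw [this]
  refine (Matrix.rank_mul_le_left P Q).trans ((Matrix.rank_le_card_width P).trans ?_)
  rw [Fintype.card_coe]
  exact le_rfl

theorem IXw_le_Pw (K : Type*) [Field K] [Infinite K] (m n : ℕ) (w : Equiv.Perm ℕ) :
    IXw K m n w ≤ Pw K m n w := by
  intro f hf
  rw [mem_Pw]
  intro x y
  have hf' : ∀ A ∈ Xw K m n w,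
      MvPolynomial.eval (fun v : Fin m × Fin n => A v.1 v.2) f = 0 := hf
  have h := hf' _ (Mxy_mem_Xw m n w x y)
  simp only [Matrix.of_apply] at h
  exact h

theorem genMon_eq (K : Type*) [Field K] {m n : ℕ} (A : Finset (Fin m)) (B : Finset (Fin n))
    (h : A.card = B.card) :
    genMon K A B h = MvPolynomial.monomial (antidiagExp A B h) (1 : K) := by
  unfold genMon antidiagExp
  rw [MvPolynomial.monomial_sum_one]
  rfl

theorem monomial_mem_Jw (K : Type*) [Field K] {m n : ℕ} {w : Equiv.Perm ℕ}
    {d : (Fin m × Fin n) →₀ ℕ} (hd : ¬ Good w d) :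
    MvPolynomial.monomial d (1 : K) ∈ JwIdeal K m n w := by
  obtain ⟨i, j, A, B, h, ⟨h1, h2, h3, h4, h5, h6, h7⟩, hle⟩ := exists_antidiag hd
  obtain ⟨e, rfl⟩ := exists_add_of_le hle
  have : MvPolynomial.monomial (antidiagExp A B h + e) (1 : K) =
      MvPolynomial.monomial e 1 * genMon K A B h := by
    rw [genMon_eq, MvPolynomial.monomial_mul, add_comm, one_mul]
  rw [this]
  exact Ideal.mul_mem_left _ _ (Ideal.subset_span ⟨i, j, A, B, h, h1, h2, h3, h4, h5, h6, h7, rfl⟩)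

theorem lin_mem {K σ : Type*} [Field K] (I : Ideal (MvPolynomial σ K)) (R : MvPolynomial σ K)
    (nf : (σ →₀ ℕ) → MvPolynomial σ K)
    (h : ∀ d ∈ R.support, MvPolynomial.monomial d 1 - nf d ∈ I) :
    R - ∑ d ∈ R.support, MvPolynomial.coeff d R • nf d ∈ I := by
  have e : R - ∑ d ∈ R.support, MvPolynomial.coeff d R • nf d =
      ∑ d ∈ R.support, MvPolynomial.coeff d R • (MvPolynomial.monomial d 1 - nf d) := by
    simp only [smul_sub, Finset.sum_sub_distrib]
    congr 1
    conv_lhs => rw [MvPolynomial.as_sum R]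
    apply Finset.sum_congr rfl
    intro d _
    rw [MvPolynomial.smul_monomial, smul_eq_mul, mul_one]
  rw [e]
  refine Ideal.sum_mem _ fun d hd => ?_
  rw [MvPolynomial.smul_eq_C_mul]
  exact Ideal.mul_mem_left _ _ (h d hd)

theorem lin_supp {K σ : Type*} [Field K] (R : MvPolynomial σ K)
    (nf : (σ →₀ ℕ) → MvPolynomial σ K) (e : σ →₀ ℕ)
    (he : e ∈ (∑ d ∈ R.support, MvPolynomial.coeff d R • nf d).support) :
    ∃ d ∈ R.support, e ∈ (nf d).support := by
  classical
  have := MvPolynomial.support_sum he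
  obtain ⟨d, hd, h⟩ := Finset.mem_biUnion.1 this
  exact ⟨d, hd, MvPolynomial.support_smul h⟩

theorem NF {K : Type*} [Field K] {m n : ℕ} (τ : TermOrder (Fin m × Fin n))
    (hanti : ∀ (A : Finset (Fin m)) (B : Finset (Fin n)) (h : A.card = B.card),
      antidiagExp A B h ∈ (genMinor K A B h).support ∧
        ∀ d ∈ (genMinor K A B h).support, τ.le d (antidiagExp A B h))
    (w : Equiv.Perm ℕ) (d : (Fin m × Fin n) →₀ ℕ) :
    ∃ g : MvPolynomial (Fin m × Fin n) K, MvPolynomial.monomial d 1 - g ∈ IwIdeal K m n w ∧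
      ∀ e ∈ g.support, Good w e ∧ τ.le e d := by
  classical
  induction d using τ.wf.induction with
  | _ d ih =>
  by_cases hd : Good w d
  · refine ⟨MvPolynomial.monomial d 1, by simp, fun e he => ?_⟩
    have : e = d := by simpa using MvPolynomial.support_monomial_subset he
    subst this
    exact ⟨hd, τ.refl _⟩
  obtain ⟨i, j, A, B, h, ⟨h1, h2, h3, h4, h5, h6, h7⟩, hle⟩ := exists_antidiag hd
  obtain ⟨e, rfl⟩ := exists_add_of_le hle
  obtain ⟨a1, a2⟩ := hanti A B h
  have hMI : genMinor K A B h ∈ IwIdeal K m n w :=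
    Ideal.subset_span ⟨i, j, A, B, h, h1, h2, h3, h4, h5, h6, h7, rfl⟩
  generalize genMinor K A B h = M at *
  generalize antidiagExp A B h = D at *
  have hc : MvPolynomial.coeff D M ≠ 0 := MvPolynomial.mem_support_iff.1 a1
  set F := MvPolynomial.monomial e (MvPolynomial.coeff D M)⁻¹ * M with hF
  have hFI : F ∈ IwIdeal K m n w := Ideal.mul_mem_left _ _ hMI
  have hF1 : MvPolynomial.coeff (D + e) F = 1 := by
    rw [hF, add_comm, MvPolynomial.coeff_monomial_mul, inv_mul_cancel₀ hc]
  have hF2 : ∀ d' ∈ F.support, τ.le d' (D + e) := by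
    intro d' hd'
    have := MvPolynomial.support_mul _ _ hd'
    obtain ⟨s, hs, t, ht, rfl⟩ := Finset.mem_add.1 this
    have : s = e := by simpa using MvPolynomial.support_monomial_subset hs
    subst this
    rw [add_comm s t]
    exact τ.add_le_add_right _ _ _ (a2 t ht)
  set R := MvPolynomial.monomial (D + e) (1 : K) - F with hR
  have hR2 : ∀ d' ∈ R.support, τ.le d' (D + e) ∧ d' ≠ D + e := by
    intro d' hd'
    have hne : d' ≠ D + e := by
      rintro rfl
      rw [MvPolynomial.mem_support_iff, hR, MvPolynomial.coeff_sub, hF1] at hd'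
      simp at hd'
    refine ⟨hF2 d' ?_, hne⟩
    rw [MvPolynomial.mem_support_iff, hR, MvPolynomial.coeff_sub,
      MvPolynomial.coeff_monomial, if_neg (Ne.symm hne), zero_sub, neg_ne_zero] at hd'
    exact MvPolynomial.mem_support_iff.2 hd'
  choose! nf hnf using ih
  refine ⟨∑ d' ∈ R.support, MvPolynomial.coeff d' R • nf d', ?_, ?_⟩
  · have := lin_mem (IwIdeal K m n w) R nf (fun d' hd' => (hnf d' (hR2 d' hd')).1)
    have h2 := Ideal.add_mem _ hFI this
    rw [hR] at h2 ⊢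
    convert h2 using 1
    ring
  · intro e' he'
    obtain ⟨d', hd', h'⟩ := lin_supp _ _ _ he'
    obtain ⟨g1, g2⟩ := (hnf d' (hR2 d' hd')).2 e' h'
    exact ⟨g1, τ.trans _ _ _ g2 (hR2 d' hd').1⟩

/-- standard monomials are independent modulo the orbit ideal -/
def StdInd (K : Type*) [Field K] (m n : ℕ) (w : Equiv.Perm ℕ) : Prop :=
  ∀ g ∈ Pw K m n w, (∀ e ∈ g.support, Good w e) → g = 0

theorem initP {K : Type*} [Field K] [Infinite K] {m n : ℕ} (τ : TermOrder (Fin m × Fin n))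
    (hanti : ∀ (A : Finset (Fin m)) (B : Finset (Fin n)) (h : A.card = B.card),
      antidiagExp A B h ∈ (genMinor K A B h).support ∧
        ∀ d ∈ (genMinor K A B h).support, τ.le d (antidiagExp A B h))
    {w : Equiv.Perm ℕ} (hS : StdInd K m n w) {f : MvPolynomial (Fin m × Fin n) K}
    (hf : f ∈ Pw K m n w) {m0 : (Fin m × Fin n) →₀ ℕ} (hm0 : m0 ∈ f.support)
    (hmax : ∀ d ∈ f.support, τ.le d m0) : ¬ Good w m0 := by
  classical
  intro hg
  have key : ∀ d : (Fin m × Fin n) →₀ ℕ, ∃ g : MvPolynomial (Fin m × Fin n) K,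
      MvPolynomial.monomial d 1 - g ∈ IwIdeal K m n w ∧
      (∀ e ∈ g.support, Good w e ∧ τ.le e d) ∧ (d = m0 → g = MvPolynomial.monomial m0 1) := by
    intro d
    by_cases h : d = m0
    · subst h
      refine ⟨MvPolynomial.monomial d 1, by simp, fun e he => ?_, fun _ => rfl⟩
      have : e = d := by simpa using MvPolynomial.support_monomial_subset he
      subst this
      exact ⟨hg, τ.refl _⟩
    · obtain ⟨g, g1, g2⟩ := NF τ hanti w d
      exact ⟨g, g1, g2, fun h' => absurd h' h⟩
  choose nf n1 n2 n3 using key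
  have h1 := lin_mem (IwIdeal K m n w) f nf (fun d _ => n1 d)
  have h2 := IXw_le_Pw K m n w (Iw_le_IXw K m n w h1)
  have h3 : ∑ d ∈ f.support, MvPolynomial.coeff d f • nf d ∈ Pw K m n w := by
    have := Ideal.sub_mem _ hf h2
    rwa [sub_sub_cancel] at this
  have h4 := hS _ h3 (fun e he => by
    obtain ⟨d, _, h'⟩ := lin_supp _ _ _ he
    exact (n2 d e h').1)
  have h5 := congrArg (MvPolynomial.coeff m0) h4
  rw [MvPolynomial.coeff_sum, Finset.sum_eq_single_of_mem m0 hm0, n3 m0 rfl] at h5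
  · simp at h5
    exact MvPolynomial.mem_support_iff.1 hm0 h5
  · intro d hd hne
    rw [MvPolynomial.coeff_smul]
    have : MvPolynomial.coeff m0 (nf d) = 0 := by
      by_contra hc
      have := (n2 d m0 (MvPolynomial.mem_support_iff.2 hc)).2
      exact hne (τ.antisymm _ _ (hmax d hd) this)
    rw [this, smul_zero]

theorem Pw_le_Iw {K : Type*} [Field K] [Infinite K] {m n : ℕ} (τ : TermOrder (Fin m × Fin n))
    (hanti : ∀ (A : Finset (Fin m)) (B : Finset (Fin n)) (h : A.card = B.card),
      antidiagExp A B h ∈ (genMinor K A B h).support ∧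
        ∀ d ∈ (genMinor K A B h).support, τ.le d (antidiagExp A B h))
    {w : Equiv.Perm ℕ} (hS : StdInd K m n w) : Pw K m n w ≤ IwIdeal K m n w := by
  intro f hf
  choose nf n1 n2 using NF (K := K) τ hanti w
  have h1 := lin_mem (IwIdeal K m n w) f nf (fun d _ => n1 d)
  have h2 := IXw_le_Pw K m n w (Iw_le_IXw K m n w h1)
  have h3 : ∑ d ∈ f.support, MvPolynomial.coeff d f • nf d ∈ Pw K m n w := by
    have := Ideal.sub_mem _ hf h2
    rwa [sub_sub_cancel] at this
  have h4 := hS _ h3 (fun e he => by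
    obtain ⟨d, _, h'⟩ := lin_supp _ _ _ he
    exact (n2 d e h').1)
  rwa [h4, sub_zero] at h1

theorem stdInd {K : Type*} [Field K] [Infinite K] {m n : ℕ} (τ : TermOrder (Fin m × Fin n))
    (hanti : ∀ (A : Finset (Fin m)) (B : Finset (Fin n)) (h : A.card = B.card),
      antidiagExp A B h ∈ (genMinor K A B h).support ∧
        ∀ d ∈ (genMinor K A B h).support, τ.le d (antidiagExp A B h)) (N : ℕ) :
    ∀ w : Equiv.Perm ℕ, w 0 = 0 →
      ∑ i ∈ Finset.Icc 1 m, ∑ j ∈ Finset.Icc 1 n, rnk w i j = N → StdInd K m n w := by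
  classical
  induction N using Nat.strong_induction_on with
  | _ N IH =>
  intro w w0 hN
  have wpos : ∀ a, 1 ≤ a → 1 ≤ w a := by
    intro a ha
    by_contra hc
    have : w a = w 0 := by omega
    have := w.injective this
    omega
  by_cases hex : ∃ a, 1 ≤ a ∧ a ≤ m ∧ w a ≤ n
  swap
  · intro g hg hgood
    have hd0 : ∀ d ∈ g.support, d = 0 := by
      intro d hd
      by_contra hne
      obtain ⟨⟨a, b⟩, hab⟩ := Finsupp.ne_iff.1 hne
      apply hgood d hd (a + 1) (b + 1) (by omega) (by omega) (by omega) (by omega)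
      have hr : rnk w (a + 1) (b + 1) = 0 := by
        unfold rnk
        rw [Finset.card_eq_zero, Finset.filter_eq_empty_iff]
        intro c hc hw
        rw [Finset.mem_Icc] at hc hw
        exact hex ⟨c, hc.1, by omega, by omega⟩
      rw [hr]
      exact ⟨fun _ => a + 1, fun _ => b + 1, fun t _ => ⟨⟨a, b, rfl, rfl, hab⟩, le_rfl, le_rfl⟩,
        fun t ht => by omega⟩
    have hgc : g = MvPolynomial.C (MvPolynomial.coeff 0 g) := by
      ext d
      rw [MvPolynomial.coeff_C]
      split_ifs with h
      · rw [← h]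
      · by_contra hc
        exact h (hd0 d (MvPolynomial.mem_support_iff.2 hc)).symm
    rw [mem_Pw] at hg
    have := hg 0 0
    rw [hgc, MvPolynomial.eval_C] at this
    rw [hgc, this, map_zero]
  obtain ⟨hp1, hpm, hwn⟩ := Nat.find_spec hex
  have hfm : ∀ a < Nat.find hex, ¬ (1 ≤ a ∧ a ≤ m ∧ w a ≤ n) := fun a ha => Nat.find_min hex ha
  generalize Nat.find hex = P at hp1 hpm hwn hfm
  obtain ⟨p, hp⟩ : ∃ p : Fin m, (p : ℕ) + 1 = P := ⟨⟨P - 1, by omega⟩, by simp; omega⟩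
  subst hp
  have := wpos _ hp1
  obtain ⟨q, hq⟩ : ∃ q : Fin n, w ((p : ℕ) + 1) = (q : ℕ) + 1 :=
    ⟨⟨w ((p : ℕ) + 1) - 1, by omega⟩, by simp; omega⟩
  have hmin : ∀ a : ℕ, 1 ≤ a → a ≤ (p : ℕ) → n < w a := by
    intro a h1 h2
    by_contra hc
    exact hfm a (by omega) ⟨h1, by omega, by omega⟩
  have hfil : (Finset.Icc 1 ((p : ℕ) + 1)).filter (fun a => w a ∈ Finset.Icc 1 ((q : ℕ) + 1)) =
      {(p : ℕ) + 1} := by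
    ext a
    simp only [Finset.mem_filter, Finset.mem_Icc, Finset.mem_singleton]
    constructor
    · rintro ⟨⟨h1, h2⟩, h3, h4⟩
      by_contra hc
      have := hmin a h1 (by omega)
      omega
    · rintro rfl
      omega
  have hrk : rnk w ((p : ℕ) + 1) ((q : ℕ) + 1) = 1 := by
    unfold rnk
    rw [hfil, Finset.card_singleton]
  have hXw : (MvPolynomial.X (p, q) : MvPolynomial (Fin m × Fin n) K) ∉ Pw K m n w := by
    rw [mem_Pw]
    intro h
    have := h 1 1
    rw [MvPolynomial.eval_X] at this
    simp only [Mxy, hfil] at this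
    simp at this
  -- facts about the swaps
  have hsw : ∀ r, (p : ℕ) + 1 < r → w (p + 1) < w r →
      StdInd K m n (w * Equiv.swap ((p : ℕ) + 1) r) ∧
      (MvPolynomial.X (p, q) : MvPolynomial (Fin m × Fin n) K) ∈
        Pw K m n (w * Equiv.swap ((p : ℕ) + 1) r) := by
    intro r hr hwr
    have hrs := rnk_swap w (p + 1) r (by omega) (by omega) hr hwr
    have hstrict := hrs (p + 1) (q + 1)
    rw [if_pos (by omega), hrk] at hstrict
    constructor
    · refine IH _ ?_ _ ?_ rfl
      · rw [← hN]
        apply Finset.sum_lt_sum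
        · intro i _
          apply Finset.sum_le_sum
          intro j _
          rw [hrs i j]
          omega
        · refine ⟨p + 1, Finset.mem_Icc.2 (by omega), ?_⟩
          apply Finset.sum_lt_sum
          · intro j _
            rw [hrs _ j]
            omega
          · refine ⟨q + 1, Finset.mem_Icc.2 (by omega), ?_⟩
            omega
      · rw [Equiv.Perm.mul_apply, Equiv.swap_apply_of_ne_of_ne (by omega) (by omega), w0]
    · rw [mem_Pw]
      intro x y
      rw [MvPolynomial.eval_X]
      unfold Mxy
      have h0 : rnk (w * Equiv.swap ((p : ℕ) + 1) r) (p + 1) (q + 1) = 0 := by omega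
      unfold rnk at h0
      rw [Finset.card_eq_zero] at h0
      simp only [h0, Finset.sum_empty]
  have main : ∀ D : ℕ, ∀ g ∈ Pw K m n w, (∀ e ∈ g.support, Good w e) →
      (∀ e ∈ g.support, Finsupp.degree e < D) → g = 0 := by
    intro D
    induction D with
    | zero =>
      intro g _ _ h
      rw [← MvPolynomial.support_eq_empty]
      exact Finset.eq_empty_of_forall_notMem fun e he => absurd (h e he) (by omega)
    | succ D ih =>
      intro g hg hgood hdeg
      have hdec := MvPolynomial.divMonomial_add_modMonomial_single g (p, q)
      set g1 := g.divMonomial (Finsupp.single (p, q) 1) with hg1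
      set g0 := g.modMonomial (Finsupp.single (p, q) 1) with hg0
      have hs0 : ∀ e ∈ g0.support, Good w e ∧ e (p, q) = 0 := by
        intro e he
        rw [MvPolynomial.mem_support_iff] at he
        by_cases hle : Finsupp.single (p, q) 1 ≤ e
        · exact absurd (MvPolynomial.coeff_modMonomial_of_le _ hle) he
        · rw [hg0, MvPolynomial.coeff_modMonomial_of_not_le _ hle] at he
          refine ⟨hgood e (MvPolynomial.mem_support_iff.2 he), ?_⟩
          rw [Finsupp.single_le_iff] at hle
          omega
      have hz0 : g0 = 0 := by
        by_contra hne
        obtain ⟨m0, hm0, hmx⟩ := τ.exists_max g0.support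
          (Finset.nonempty_iff_ne_empty.2 (fun h => hne (MvPolynomial.support_eq_empty.1 h)))
        obtain ⟨r, r1, r2, r3⟩ := good_swap w0 p q hq hmin (hs0 m0 hm0).1 (hs0 m0 hm0).2
        obtain ⟨s1, s2⟩ := hsw r r1 r2
        refine initP τ hanti s1 ?_ hm0 hmx r3
        have hgv := Pw_le_swap m n w w0 (p + 1) r (by omega) r1 r2 hg
        have e : g0 = g - MvPolynomial.X (p, q) * g1 := by
          rw [eq_sub_iff_add_eq, add_comm]; exact hdec
        rw [e]
        exact Ideal.sub_mem _ hgv (Ideal.mul_mem_right _ _ s2)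
      rw [hz0, add_zero] at hdec
      have hg1P : g1 ∈ Pw K m n w := by
        rw [← hdec] at hg
        exact ((Pw_prime K m n w).mem_or_mem hg).resolve_left hXw
      have hs1 : ∀ e ∈ g1.support, Finsupp.single (p, q) 1 + e ∈ g.support := by
        intro e he
        rw [MvPolynomial.mem_support_iff, hg1, MvPolynomial.coeff_divMonomial] at he
        exact MvPolynomial.mem_support_iff.2 he
      have hz1 : g1 = 0 := by
        apply ih g1 hg1P
        · intro e he
          exact (hgood _ (hs1 e he)).mono le_add_self
        · intro e he
          have := hdeg _ (hs1 e he)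
          rw [map_add, Finsupp.degree_single] at this
          omega
      rw [← hdec, hz1, mul_zero]
  intro g hg hgood
  refine main (g.support.sup Finsupp.degree + 1) g hg hgood (fun e he => ?_)
  exact Nat.lt_succ_of_le (Finset.le_sup (f := Finsupp.degree) he)

theorem initIdealLe_mono {K σ : Type*} [Field K] (τ : TermOrder σ) {I J : Ideal (MvPolynomial σ K)}
    (h : I ≤ J) : initIdealLe τ I ≤ initIdealLe τ J := by
  apply Ideal.span_mono
  rintro g ⟨f, hf, r⟩
  exact ⟨f, h hf, r⟩

theorem Jw_le {K : Type*} [Field K] {m n : ℕ} (τ : TermOrder (Fin m × Fin n))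
    (hanti : ∀ (A : Finset (Fin m)) (B : Finset (Fin n)) (h : A.card = B.card),
      antidiagExp A B h ∈ (genMinor K A B h).support ∧
        ∀ d ∈ (genMinor K A B h).support, τ.le d (antidiagExp A B h)) (w : Equiv.Perm ℕ) :
    JwIdeal K m n w ≤ initIdealLe τ (IwIdeal K m n w) := by
  unfold JwIdeal
  rw [Ideal.span_le]
  rintro _ ⟨i, j, A, B, h, h1, h2, h3, h4, h5, h6, h7, rfl⟩
  refine Ideal.subset_span ⟨genMinor K A B h,
    Ideal.subset_span ⟨i, j, A, B, h, h1, h2, h3, h4, h5, h6, h7, rfl⟩, ?_,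
    antidiagExp A B h, (hanti A B h).1, (hanti A B h).2, genMon_eq K A B h⟩
  intro h0
  have := (hanti A B h).1
  rw [h0] at this
  simp at this

theorem init_Pw_le {K : Type*} [Field K] [Infinite K] {m n : ℕ} (τ : TermOrder (Fin m × Fin n))
    (hanti : ∀ (A : Finset (Fin m)) (B : Finset (Fin n)) (h : A.card = B.card),
      antidiagExp A B h ∈ (genMinor K A B h).support ∧
        ∀ d ∈ (genMinor K A B h).support, τ.le d (antidiagExp A B h)) {w : Equiv.Perm ℕ}
    (hS : StdInd K m n w) : initIdealLe τ (Pw K m n w) ≤ JwIdeal K m n w := by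
  unfold initIdealLe
  rw [Ideal.span_le]
  rintro _ ⟨f, hf, _, m0, h1, h2, rfl⟩
  exact monomial_mem_Jw K (initP τ hanti hS hf h1 h2)

/-- **Knutson–Miller.** Let `w ∈ S^{m,n}_∞` and fix an antidiagonal term
order on `K[u_{ij} : (i,j) ∈ [m] × [n]]` (i.e. the initial term of each minor
`det(U_{AB})` is the antidiagonal monomial `u_{AB}`). Then
`J_w = init(I_w) = init(I(X_w))` and `I_w = I(X_w)`; in particular `I_w` is prime, and
the defining minors of `I_w` form a Gröbner basis for `I(X_w)`. -/
theorem statement17 (K : Type*) [Field K] [IsAlgClosed K] (m n : ℕ)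
    (hm : 1 ≤ m) (hn : 1 ≤ n) (w : Equiv.Perm ℕ) (hw : w ∈ SmnInfty m n)
    (τ : TermOrder (Fin m × Fin n))
    (hanti : ∀ (A : Finset (Fin m)) (B : Finset (Fin n)) (h : A.card = B.card),
      antidiagExp A B h ∈ (genMinor K A B h).support ∧
        ∀ d ∈ (genMinor K A B h).support, τ.le d (antidiagExp A B h)) :
    JwIdeal K m n w = initIdealLe τ (IwIdeal K m n w) ∧
      JwIdeal K m n w = initIdealLe τ (IXw K m n w) ∧
      IwIdeal K m n w = IXw K m n w ∧ (IwIdeal K m n w).IsPrime := by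
  have hinf : Infinite K := inferInstance
  have hS : StdInd K m n w := stdInd τ hanti _ w hw.1.1 rfl
  have e1 : IwIdeal K m n w = Pw K m n w := le_antisymm
    ((Iw_le_IXw K m n w).trans (IXw_le_Pw K m n w)) (Pw_le_Iw τ hanti hS)
  have e2 : IwIdeal K m n w = IXw K m n w := le_antisymm (Iw_le_IXw K m n w)
    ((IXw_le_Pw K m n w).trans (Pw_le_Iw τ hanti hS))
  have e3 : JwIdeal K m n w = initIdealLe τ (IwIdeal K m n w) := by
    apply le_antisymm (Jw_le τ hanti w)
    rw [e1]
    exact init_Pw_le τ hanti hS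
  refine ⟨e3, ?_, e2, ?_⟩
  · rw [← e2]
    exact e3
  · rw [e1]
    exact Pw_prime K m n w

end Paper
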